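/- arXiv:1003.5408 — 5 statements merged into one kernel-verified Lean document; each statement's English description precedes it below -/
import Mathlib

section
/- T is the maximal abelian normal subgroup of G₆: T is an abelian normal subgroup of G₆, and every abelian normal subgroup of G₆ is contained in T. -/
/-! `Aff(3) = ℝ³ ⋊ GL(3,ℝ)`, realized as the group of affine self-equivalences of `ℝ³`
(with multiplication given by composition, so that `(v,A)(w,B) = (v + Aw, AB)`). -/

abbrev V3 : Type := Fin 3 → ℝ
abbrev Aff3 : Type := V3 ≃ᵃ[ℝ] V3

/-- The linear self-equivalence of `ℝ³` given by a diagonal matrix with entries `±1`. -/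
noncomputable def diagLin (d : Fin 3 → ℝ) (hd : ∀ i, d i * d i = 1) : V3 ≃ₗ[ℝ] V3 where
  toFun v := fun i => d i * v i
  invFun v := fun i => d i * v i
  map_add' u v := by funext i; simp [mul_add]
  map_smul' c v := by funext i; simp [smul_eq_mul]; ring
  left_inv v := by funext i; simp [← mul_assoc, hd i]
  right_inv v := by funext i; simp [← mul_assoc, hd i]

lemma sq_one_X : ∀ i, (![(1:ℝ),-1,-1]) i * (![(1:ℝ),-1,-1]) i = 1 := by
  intro i; fin_cases i <;> norm_num

lemma sq_one_Y : ∀ i, (![(-1:ℝ),1,-1]) i * (![(-1:ℝ),1,-1]) i = 1 := by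
  intro i; fin_cases i <;> norm_num

/-- The affine transformation `x = (½e₁, X)`, acting by `w ↦ Xw + ½e₁`,
where `X = diag[1,−1,−1]`. -/
noncomputable def affx : Aff3 :=
  ((diagLin ![1,-1,-1] sq_one_X).toAffineEquiv).trans
    (AffineEquiv.constVAdd ℝ V3 ![1/2, 0, 0])

/-- The affine transformation `y = (½(e₂−e₃), Y)`, acting by `w ↦ Yw + ½(e₂−e₃)`,
where `Y = diag[−1,1,−1]`. -/
noncomputable def affy : Aff3 :=
  ((diagLin ![-1,1,-1] sq_one_Y).toAffineEquiv).trans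
    (AffineEquiv.constVAdd ℝ V3 ![0, 1/2, -1/2])

/-- `z = xy = (½(e₁−e₂+e₃), Z)`. -/
noncomputable def affz : Aff3 := affx * affy

/-- The Hantzsche–Wendt group `G₆`, the subgroup of `Aff(3)` generated by `x` and `y`. -/
noncomputable def G6 : Subgroup Aff3 := Subgroup.closure {affx, affy}

/-- The translation subgroup `T = G₆ ∩ (ℝ³ × {I})`: the elements of `G₆`
whose linear part is the identity. -/
noncomputable def TT : Subgroup Aff3 :=
  G6 ⊓ (AffineEquiv.linearHom : Aff3 →* (V3 ≃ₗ[ℝ] V3)).ker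

lemma affx_mem : affx ∈ G6 := Subgroup.subset_closure (by simp)
lemma affy_mem : affy ∈ G6 := Subgroup.subset_closure (by simp)

/-- `x` as an element of `G₆`. -/
noncomputable def xg : G6 := ⟨affx, affx_mem⟩
/-- `y` as an element of `G₆`. -/
noncomputable def yg : G6 := ⟨affy, affy_mem⟩
/-- `z = xy` as an element of `G₆`. -/
noncomputable def zg : G6 := xg * yg

/-!
If an affine automorphism `h` has linear part `A`, its commutator with the translation by `u` is the
translation by `u - A u`. For a translation of `G` this lies in every normal subgroup of `G`
containing `h`; when that subgroup is also abelian, `u - A u` is therefore fixed by `A`, so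
`A ^ n u = u - n (u - A u)` for all `n`. If moreover `A` has finite order and there is no torsion,
then `A u = u`, and hence `A = 1` as soon as the translations of `G` span. In `G₆` the linear parts
square to `1`, and the squares of `x`, `y` and `z` are the three unit translations.
-/

section AffineGroup

open AffineEquiv Function

section AddMonoidHomClass

variable {V F : Type*} [AddCommGroup V] [FunLike F V V] [AddMonoidHomClass F V V] {f : F} {u : V}

theorem iterate_eq_sub_nsmul_of_isFixedPt_sub (hfix : IsFixedPt f (u - f u)) (n : ℕ) :
    f^[n] u = u - n • (u - f u) := by
  induction n with
  | zero => simp only [iterate_zero, id, zero_nsmul, sub_zero]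
  | succ n ih =>
    rw [iterate_succ_apply', ih, map_sub, map_nsmul, hfix.eq, succ_nsmul]
    abel

theorem isFixedPt_of_mem_periodicPts_of_isFixedPt_sub [IsAddTorsionFree V]
    (hper : u ∈ periodicPts f) (hfix : IsFixedPt f (u - f u)) : IsFixedPt f u := by
  obtain ⟨n, hn, hnu⟩ := hper
  have hsmul : n • (u - f u) = 0 :=
    sub_eq_self.mp ((iterate_eq_sub_nsmul_of_isFixedPt_sub hfix n).symm.trans hnu)
  exact (sub_eq_zero.mp ((nsmul_eq_zero_iff_right hn.ne').mp hsmul)).symm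

end AddMonoidHomClass

variable {k V P : Type*} [Ring k] [AddCommGroup V] [Module k V] [AddTorsor V P]

theorem mul_constVAdd (g : P ≃ᵃ[k] P) (u : V) :
    g * constVAdd k P u = constVAdd k P (g.linear u) * g := by
  ext p
  exact g.map_vadd p u

theorem commute_constVAdd_iff {g : P ≃ᵃ[k] P} {u : V} :
    Commute g (constVAdd k P u) ↔ g.linear u = u := by
  rw [commute_iff_eq, mul_constVAdd, mul_left_inj]
  obtain ⟨p⟩ : Nonempty P := inferInstance
  exact ⟨fun h => vadd_right_cancel p (congrArg (· p) h), congrArg _⟩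

theorem constVAdd_conj_eq (g : P ≃ᵃ[k] P) (u : V) :
    constVAdd k P u * g * (constVAdd k P u)⁻¹ = constVAdd k P (u - g.linear u) * g := by
  rw [mul_inv_eq_iff_eq_mul, mul_assoc, mul_constVAdd, ← mul_assoc, sub_eq_add_neg]
  congr 1
  ext p
  simp [vadd_vadd]

theorem linear_apply_eq_self_of_commute_conj [IsAddTorsionFree V] {g : P ≃ᵃ[k] P} {u : V}
    (hfin : IsOfFinOrder g.linear)
    (hcomm : Commute (constVAdd k P u * g * (constVAdd k P u)⁻¹) g) : g.linear u = u := by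
  have hfix : IsFixedPt g.linear (u - g.linear u) := by
    rw [constVAdd_conj_eq] at hcomm
    refine commute_constVAdd_iff.mp ?_
    simpa only [mul_inv_cancel_right] using hcomm.symm.mul_right (Commute.refl g).inv_right
  have hper : u ∈ periodicPts g.linear := by
    obtain ⟨n, hn, hpow⟩ := isOfFinOrder_iff_pow_eq_one.mp hfin
    refine mk_mem_periodicPts hn ?_
    rw [IsPeriodicPt, IsFixedPt, ← LinearEquiv.pow_apply, hpow, LinearEquiv.coe_one, id]
  exact isFixedPt_of_mem_periodicPts_of_isFixedPt_sub hper hfix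

theorem exists_eq_constVAdd_of_linear_eq_one {g : P ≃ᵃ[k] P} (hg : g.linear = 1) :
    ∃ u, g = constVAdd k P u := by
  obtain ⟨p⟩ : Nonempty P := inferInstance
  refine ⟨g p -ᵥ p, ext fun q => ?_⟩
  have hgq : g q = (q -ᵥ p) +ᵥ g p := by
    simpa only [vsub_vadd, hg, LinearEquiv.coe_one, id] using g.map_vadd p (q -ᵥ p)
  rw [constVAdd_apply, eq_vadd_iff_vsub_eq, hgq, vadd_vsub_assoc, add_comm, vsub_add_vsub_cancel]

theorem commute_of_linear_eq_one {g h : P ≃ᵃ[k] P} (hg : g.linear = 1) (hh : h.linear = 1) :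
    Commute g h := by
  obtain ⟨u, rfl⟩ := exists_eq_constVAdd_of_linear_eq_one hh
  rw [commute_constVAdd_iff, hg, LinearEquiv.coe_one, id]

/-- The translation subgroup of a group `G` of affine automorphisms: the elements of `G` whose
linear part is the identity. It is `TT` by definition when `G` is `G6`. -/
def translationSubgroup (G : Subgroup (P ≃ᵃ[k] P)) : Subgroup (P ≃ᵃ[k] P) :=
  G ⊓ linearHom.ker

theorem le_translationSubgroup_of_normal_of_commute [IsAddTorsionFree V]
    {G H : Subgroup (P ≃ᵃ[k] P)}
    (hspan : Submodule.span k {u : V | constVAdd k P u ∈ G} = ⊤)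
    (hfin : ∀ g ∈ G, IsOfFinOrder g.linear) (hHG : H ≤ G)
    (hcomm : ∀ a ∈ H, ∀ b ∈ H, a * b = b * a)
    (hnormal : ∀ g ∈ G, ∀ h ∈ H, g * h * g⁻¹ ∈ H) : H ≤ translationSubgroup G := by
  refine fun h hh => ⟨hHG hh, ?_⟩
  have hlin : (h.linear : V →ₗ[k] V) = LinearMap.id := by
    refine LinearMap.ext_on hspan fun u hu => ?_
    exact linear_apply_eq_self_of_commute_conj (hfin h (hHG hh))
      (hcomm _ (hnormal _ hu h hh) h hh)
  exact LinearEquiv.toLinearMap_injective hlin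

theorem statement4_general [IsAddTorsionFree V] {G : Subgroup (P ≃ᵃ[k] P)}
    (hspan : Submodule.span k {u : V | constVAdd k P u ∈ G} = ⊤)
    (hfin : ∀ g ∈ G, IsOfFinOrder g.linear) :
    translationSubgroup G ≤ G ∧
    (∀ a ∈ translationSubgroup G, ∀ b ∈ translationSubgroup G, a * b = b * a) ∧
    (∀ g ∈ G, ∀ t ∈ translationSubgroup G, g * t * g⁻¹ ∈ translationSubgroup G) ∧
    (∀ H : Subgroup (P ≃ᵃ[k] P), H ≤ G → (∀ a ∈ H, ∀ b ∈ H, a * b = b * a) →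
      (∀ g ∈ G, ∀ h ∈ H, g * h * g⁻¹ ∈ H) → H ≤ translationSubgroup G) :=
  ⟨inf_le_left,
    fun _ ha _ hb => commute_of_linear_eq_one ha.2 hb.2,
    fun g hg t ht => ⟨mul_mem (mul_mem hg ht.1) (G.inv_mem hg),
      (MonoidHom.normal_ker _).conj_mem t ht.2 g⟩,
    fun _ => le_translationSubgroup_of_normal_of_commute hspan hfin⟩

end AffineGroup

theorem diagLin_mul_self (d : V3) (hd : ∀ i, d i * d i = 1) : diagLin d hd * diagLin d hd = 1 :=
  mul_eq_one_iff_eq_inv.mpr rfl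

theorem exists_linear_eq_diagLin {g : Aff3} (hg : g ∈ G6) :
    ∃ d hd, g.linear = diagLin d hd := by
  induction hg using Subgroup.closure_induction with
  | mem g hg =>
    rcases hg with rfl | rfl
    · exact ⟨_, sq_one_X, LinearEquiv.ext fun _ => rfl⟩
    · exact ⟨_, sq_one_Y, LinearEquiv.ext fun _ => rfl⟩
  | one => exact ⟨1, fun _ => one_mul 1, LinearEquiv.ext fun v => (one_mul v).symm⟩
  | mul a b _ _ ha hb =>
    obtain ⟨d, hd, ha⟩ := ha
    obtain ⟨e, he, hb⟩ := hb
    refine ⟨d * e, fun i => ?_, LinearEquiv.ext fun v => ?_⟩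
    · rw [Pi.mul_apply, mul_mul_mul_comm, hd, he, one_mul]
    · change a.linear (b.linear v) = d * e * v
      rw [ha, hb, mul_assoc]
      rfl
  | inv a _ ha =>
    obtain ⟨d, hd, ha⟩ := ha
    exact ⟨d, hd, congrArg (·⁻¹) ha⟩

theorem isOfFinOrder_linear_of_mem_G6 {g : Aff3} (hg : g ∈ G6) : IsOfFinOrder g.linear := by
  obtain ⟨d, hd, hlin⟩ := exists_linear_eq_diagLin hg
  refine isOfFinOrder_iff_pow_eq_one.mpr ⟨2, two_pos, ?_⟩
  rw [hlin, sq, diagLin_mul_self]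

theorem affx_apply (w : V3) : affx w = ![w 0 + 1 / 2, -w 1, -w 2] := by
  ext i
  fin_cases i <;> simp [affx, diagLin, add_comm]

theorem affy_apply (w : V3) : affy w = ![-w 0, w 1 + 1 / 2, -w 2 - 1 / 2] := by
  ext i
  fin_cases i <;> simp [affy, diagLin] <;> ring

theorem affz_apply (w : V3) : affz w = ![-w 0 + 1 / 2, -w 1 - 1 / 2, w 2 + 1 / 2] := by
  rw [affz, AffineEquiv.mul_def, AffineEquiv.trans_apply, affx_apply, affy_apply]
  ext i
  fin_cases i <;> simp <;> ring

theorem affx_mul_self : affx * affx = AffineEquiv.constVAdd ℝ V3 (Pi.single 0 1) := by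
  ext w i
  fin_cases i <;> simp [affx_apply]
  ring

theorem affy_mul_self : affy * affy = AffineEquiv.constVAdd ℝ V3 (Pi.single 1 1) := by
  ext w i
  fin_cases i <;> simp [affy_apply]
  ring

theorem affz_mul_self : affz * affz = AffineEquiv.constVAdd ℝ V3 (Pi.single 2 1) := by
  ext w i
  fin_cases i <;> simp [affz_apply]
  ring

theorem constVAdd_single_mem_G6 (i : Fin 3) :
    AffineEquiv.constVAdd ℝ V3 (Pi.single i 1) ∈ G6 := by
  have affz_mem : affz ∈ G6 := mul_mem affx_mem affy_mem
  fin_cases i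
  · exact affx_mul_self ▸ mul_mem affx_mem affx_mem
  · exact affy_mul_self ▸ mul_mem affy_mem affy_mem
  · exact affz_mul_self ▸ mul_mem affz_mem affz_mem

theorem span_translations_G6_eq_top :
    Submodule.span ℝ {u : V3 | AffineEquiv.constVAdd ℝ V3 u ∈ G6} = ⊤ := by
  rw [← top_le_iff, ← (Pi.basisFun ℝ (Fin 3)).span_eq, Submodule.span_le]
  rintro _ ⟨i, rfl⟩
  rw [Pi.basisFun_apply]
  exact Submodule.subset_span (constVAdd_single_mem_G6 i)

/-- `T` is the maximal abelian normal subgroup of `G₆`: `T` is an abelian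
subgroup of `G₆` which is normal in `G₆`, and every abelian subgroup of `G₆` which is
normal in `G₆` is contained in `T`. -/
theorem statement4 :
    TT ≤ G6 ∧
    (∀ a ∈ TT, ∀ b ∈ TT, a * b = b * a) ∧
    (∀ g ∈ G6, ∀ t ∈ TT, g * t * g⁻¹ ∈ TT) ∧
    (∀ H : Subgroup Aff3, H ≤ G6 → (∀ a ∈ H, ∀ b ∈ H, a * b = b * a) →
      (∀ g ∈ G6, ∀ h ∈ H, g * h * g⁻¹ ∈ H) → H ≤ TT) :=
  statement4_general span_translations_G6_eq_top fun _ => isOfFinOrder_linear_of_mem_G6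
end

section
/- The commutator subgroup G₆′ of G₆ is free abelian of rank 3, with basis {x⁴, y⁴, x²y²z⁻²}, and the abelianization G₆/G₆′ is isomorphic to (ℤ/4ℤ)². Moreover 2T < G₆′ < T, with T/G₆′ ≅ (ℤ/2ℤ)² and G₆′/2T ≅ ℤ/2ℤ, where 2T denotes the subgroup of squares of elements of T. -/
/-- The commutator subgroup `G₆′` of `G₆`. -/
noncomputable def G6' : Subgroup Aff3 := ⁅G6, G6⁆

/-- `2T`, the subgroup of squares of elements of `T`. -/
noncomputable def twoT : Subgroup Aff3 :=
  Subgroup.closure ((fun g => g ^ 2) '' (TT : Set Aff3))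

/-! An element of `G₆` is determined by its translation part `½(a, b, c)`: the integers satisfy
`b ≡ c (mod 2)`, and the linear part is `diag[(-1)^b, (-1)^a, (-1)^(a+b)]`. In these coordinates the
product is integer addition up to signs, and a quadratic correction modulo `4` turns it into a
homomorphism from `G₆` onto `(ℤ/4ℤ)²`. Its target being abelian, the kernel contains `G₆′`;
solving the congruences shows that the kernel is the lattice spanned by the translations `x⁴`, `y⁴`
and `x²y²z⁻²`; and these are the commutators `[x², y]`, `[y², x]` and `[y, x⁻¹]`. So the three
groups coincide, and `2T`, `G₆′` and `T` become explicit lattices in `ℤ³` to compare by parity. -/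

section General

lemma exists_surjective_ker_eq_subgroupOf {A B G : Type*} [Group A] [Group B] [Group G]
    {H K : Subgroup G} (e : A ≃* K) {χ : A →* B} (hχ : Function.Surjective χ)
    (hker : ∀ a, χ a = 1 ↔ (e a : G) ∈ H) :
    ∃ ψ : K →* B, Function.Surjective ψ ∧ ψ.ker = H.subgroupOf K := by
  refine ⟨χ.comp e.symm.toMonoidHom, hχ.comp e.symm.surjective, ?_⟩
  ext k
  change χ (e.symm k) = 1 ↔ (k : G) ∈ H
  simpa only [e.apply_symm_apply] using hker (e.symm k)

lemma lt_of_surjective_of_ker_eq_subgroupOf {B G : Type*} [Group B] [Nontrivial B] [Group G]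
    {H K : Subgroup G} (hHK : H ≤ K)
    (h : ∃ ψ : K →* B, Function.Surjective ψ ∧ ψ.ker = H.subgroupOf K) : H < K := by
  refine lt_of_le_of_ne hHK ?_
  rintro rfl
  obtain ⟨ψ, hψ, hker⟩ := h
  obtain ⟨b, hb⟩ := exists_ne (1 : B)
  obtain ⟨k, rfl⟩ := hψ b
  refine hb (MonoidHom.mem_ker.1 ?_)
  rw [hker, Subgroup.subgroupOf_self]
  exact Subgroup.mem_top k

lemma closure_pow_image_range {A G : Type*} [CommGroup A] [Group G] (f : A →* G) (n : ℕ) :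
    Subgroup.closure ((fun g ↦ g ^ n) '' (f.range : Set G)) = (f.comp (powMonoidHom n)).range := by
  rw [← Subgroup.closure_eq (f.comp (powMonoidHom n)).range, MonoidHom.coe_range,
    MonoidHom.coe_range, ← Set.range_comp]
  congr 2
  ext a
  simp

lemma range_le_of_basis_mem {G : Type*} [Group G] {H : Subgroup G}
    {f : Multiplicative (ℤ × ℤ × ℤ) →* G} (h₁ : f (.ofAdd (1, 0, 0)) ∈ H)
    (h₂ : f (.ofAdd (0, 1, 0)) ∈ H) (h₃ : f (.ofAdd (0, 0, 1)) ∈ H) : f.range ≤ H := by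
  rintro _ ⟨t, rfl⟩
  obtain ⟨a, b, c⟩ := t
  have decomposition : (.ofAdd (a, b, c) : Multiplicative (ℤ × ℤ × ℤ)) =
      .ofAdd (1, 0, 0) ^ a * .ofAdd (0, 1, 0) ^ b * .ofAdd (0, 0, 1) ^ c := by
    simp only [← ofAdd_zsmul, ← ofAdd_add]
    simp
  change f (.ofAdd (a, b, c)) ∈ H
  rw [decomposition, map_mul, map_mul, map_zpow, map_zpow, map_zpow]
  exact mul_mem (mul_mem (zpow_mem h₁ a) (zpow_mem h₂ b)) (zpow_mem h₃ c)

lemma intCast_units_mul_self {R : Type*} [NonAssocRing R] (u : ℤˣ) :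
    ((u : ℤ) : R) * (u : ℤ) = 1 := by
  rw [← Int.cast_mul, Int.units_coe_mul_self, Int.cast_one]

lemma negOnePow_units_mul (u : ℤˣ) (n : ℤ) : ((u : ℤ) * n).negOnePow = n.negOnePow := by
  rcases Int.units_eq_one_or u with rfl | rfl <;> simp [Int.negOnePow_neg]

lemma negOnePow_cast_zmod_four (n : ℤ) : ((n.negOnePow : ℤ) : ZMod 4) = 1 + 2 * n := by
  have four_eq_zero : (4 : ZMod 4) = 0 := rfl
  rcases Int.even_or_odd' n with ⟨k, rfl | rfl⟩
  · simp only [Int.negOnePow_two_mul, Units.val_one]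
    push_cast
    linear_combination -(k : ZMod 4) * four_eq_zero
  · simp only [Int.negOnePow_two_mul_add_one, Units.val_neg, Units.val_one]
    push_cast
    linear_combination (-(k : ZMod 4) - 1) * four_eq_zero

lemma two_mul_intCast_zmod_four_eq {m n : ℤ} (h : Even (m - n)) : (2 * m : ZMod 4) = 2 * n := by
  obtain ⟨k, hk⟩ := h
  have four_eq_zero : (4 : ZMod 4) = 0 := rfl
  rw [sub_eq_iff_eq_add.1 hk]
  push_cast
  linear_combination (k : ZMod 4) * four_eq_zero

end General

section Coordinates

/-- The affine map with translation part `½(a, b, c)` and linear part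
`diag[(-1)^b, (-1)^a, (-1)^(a+b)]`. Every element of `G₆` has this shape, with `b ≡ c (mod 2)`:
the linear part is determined by the translation part. -/
noncomputable def gridAff (a b c : ℤ) : Aff3 :=
  (diagLin ![((b.negOnePow : ℤ) : ℝ), ((a.negOnePow : ℤ) : ℝ), (((a + b).negOnePow : ℤ) : ℝ)]
    (by
      intro i
      fin_cases i <;> exact intCast_units_mul_self _)).toAffineEquiv.trans
    (AffineEquiv.constVAdd ℝ V3 ![a / 2, b / 2, c / 2])

lemma gridAff_apply (a b c : ℤ) (w : V3) :
    gridAff a b c w = ![(b.negOnePow : ℤ) * w 0 + a / 2, (a.negOnePow : ℤ) * w 1 + b / 2,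
      ((a + b).negOnePow : ℤ) * w 2 + c / 2] := by
  ext i
  fin_cases i <;> simp [gridAff, diagLin, add_comm]

lemma gridAff_mul (a b c a' b' c' : ℤ) :
    gridAff a b c * gridAff a' b' c' =
      gridAff (a + b.negOnePow * a') (b + a.negOnePow * b') (c + (a + b).negOnePow * c') := by
  ext w i
  simp only [AffineEquiv.coe_mul, Function.comp_apply, gridAff_apply, Int.negOnePow_add,
    negOnePow_units_mul, Units.val_mul, Int.cast_add, Int.cast_mul]
  fin_cases i <;> simp only [Matrix.cons_val, Fin.reduceFinMk] <;> ring

lemma gridAff_zero : gridAff 0 0 0 = 1 := by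
  ext w i
  fin_cases i <;> simp [gridAff_apply]

lemma gridAff_inv (a b c : ℤ) :
    (gridAff a b c)⁻¹ =
      gridAff (-(b.negOnePow * a)) (-(a.negOnePow * b)) (-((a + b).negOnePow * c)) := by
  rw [inv_eq_iff_mul_eq_one, gridAff_mul, ← gridAff_zero]
  congr 1 <;> rw [mul_neg, ← mul_assoc, Int.units_coe_mul_self, one_mul, add_neg_cancel]

lemma affx_eq_gridAff : affx = gridAff 1 0 0 := by
  ext w i
  fin_cases i <;> simp [affx, diagLin, gridAff_apply, add_comm]

lemma affy_eq_gridAff : affy = gridAff 0 1 (-1) := by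
  ext w i
  fin_cases i <;> simp [affy, diagLin, gridAff_apply, add_comm]

lemma affz_eq_gridAff : affz = gridAff 1 (-1) 1 := by
  simp [affz, affx_eq_gridAff, affy_eq_gridAff, gridAff_mul]

/-- The `i`-th coordinate of `2 • g 0`, which is an integer for the elements `g` of `G₆`. The floor
only serves to land in `ℤ`. -/
noncomputable def gridCoord (g : Aff3) (i : Fin 3) : ℤ := ⌊2 * g 0 i⌋

lemma gridCoord_gridAff (a b c : ℤ) : gridCoord (gridAff a b c) = ![a, b, c] := by
  ext i
  fin_cases i <;> simp [gridCoord, gridAff_apply, mul_div_cancel₀]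

lemma gridAff_inj {a b c a' b' c' : ℤ} :
    gridAff a b c = gridAff a' b' c' ↔ a = a' ∧ b = b' ∧ c = c' := by
  refine ⟨fun h ↦ ?_, by rintro ⟨rfl, rfl, rfl⟩; rfl⟩
  simpa [gridCoord_gridAff] using congrArg gridCoord h

lemma linearHom_gridAff_apply (a b c : ℤ) (w : V3) :
    AffineEquiv.linearHom (gridAff a b c) w = ![(b.negOnePow : ℤ) * w 0, (a.negOnePow : ℤ) * w 1,
      ((a + b).negOnePow : ℤ) * w 2] := by
  ext i
  fin_cases i <;> rfl

lemma linearHom_gridAff_eq_one_iff {a b c : ℤ} :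
    AffineEquiv.linearHom (gridAff a b c) = 1 ↔ Even a ∧ Even b := by
  constructor
  · intro h
    have image_ones := DFunLike.congr_fun h (1 : V3)
    rw [linearHom_gridAff_apply] at image_ones
    have sign_a : ((a.negOnePow : ℤ) : ℝ) * 1 = 1 := congrFun image_ones 1
    have sign_b : ((b.negOnePow : ℤ) : ℝ) * 1 = 1 := congrFun image_ones 0
    rw [mul_one, Int.cast_eq_one, Units.val_eq_one, Int.negOnePow_eq_one_iff] at sign_a sign_b
    exact ⟨sign_a, sign_b⟩
  · rintro ⟨ha, hb⟩
    ext w i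
    rw [linearHom_gridAff_apply, Int.negOnePow_even a ha, Int.negOnePow_even b hb,
      Int.negOnePow_even (a + b) (ha.add hb)]
    fin_cases i <;> simp

lemma exists_eq_gridAff_of_mem_G6 {g : Aff3} (hg : g ∈ G6) :
    ∃ a b c : ℤ, Even (b - c) ∧ g = gridAff a b c := by
  induction hg using Subgroup.closure_induction with
  | mem g hg =>
    rcases hg with rfl | rfl
    · exact ⟨1, 0, 0, by simp, affx_eq_gridAff⟩
    · exact ⟨0, 1, -1, by decide, affy_eq_gridAff⟩
  | one => exact ⟨0, 0, 0, by simp, gridAff_zero.symm⟩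
  | mul g h _ _ ihg ihh =>
    obtain ⟨a, b, c, hbc, rfl⟩ := ihg
    obtain ⟨a', b', c', hbc', rfl⟩ := ihh
    refine ⟨_, _, _, ?_, gridAff_mul ..⟩
    simp only [← Int.negOnePow_eq_one_iff, Int.negOnePow_sub, Int.negOnePow_add,
      negOnePow_units_mul] at hbc hbc' ⊢
    rw [mul_mul_mul_comm, hbc, hbc', one_mul]
  | inv g _ ihg =>
    obtain ⟨a, b, c, hbc, rfl⟩ := ihg
    refine ⟨_, _, _, ?_, gridAff_inv ..⟩
    simpa only [← Int.negOnePow_eq_one_iff, Int.negOnePow_sub, Int.negOnePow_neg,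
      negOnePow_units_mul] using hbc

end Coordinates

section Residue

/-- The value of the abelianization map `G₆ → (ℤ/4ℤ)²` on `gridAff a b c`. The quadratic terms make
up for the twist in `gridAff_mul`; the normalization is `x ↦ (1, 0)`, `y ↦ (0, 1)`. -/
def residue (m : Fin 3 → ℤ) : ZMod 4 × ZMod 4 :=
  (m 0 + m 2 + m 2 ^ 2 + 2 * m 0 * m 2, m 1 + m 2 + m 2 ^ 2)

lemma residue_twisted_add {a b c a' b' c' : ℤ} (hbc : Even (b - c)) (hbc' : Even (b' - c')) :
    residue ![a + b.negOnePow * a', b + a.negOnePow * b', c + (a + b).negOnePow * c'] =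
      residue ![a, b, c] + residue ![a', b', c'] := by
  have four_eq_zero : (4 : ZMod 4) = 0 := rfl
  have two_b_eq := two_mul_intCast_zmod_four_eq hbc
  have two_b'_eq := two_mul_intCast_zmod_four_eq hbc'
  simp only [residue, Matrix.cons_val, Prod.mk_add_mk]
  push_cast [negOnePow_cast_zmod_four]
  refine Prod.ext ?_ ?_
  · linear_combination (a' + c' : ZMod 4) * two_b_eq + (a' * c + a * c' + c * c' +
      (a + b) * c * c' + ((a + b) + (a + b) ^ 2) * c' ^ 2 + a * (a + b) * c' + b * a' * c +
      (b + (a + b) + 2 * b * (a + b)) * a' * c' : ZMod 4) * four_eq_zero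
  · linear_combination (c' : ZMod 4) * two_b_eq + (a : ZMod 4) * two_b'_eq + (a * c' + c * c' +
      (a + b) * c * c' + ((a + b) + (a + b) ^ 2) * c' ^ 2 : ZMod 4) * four_eq_zero

/-- The abelianization map of `G₆`. -/
noncomputable def residueHom : G6 →* Multiplicative (ZMod 4 × ZMod 4) :=
  MonoidHom.mk' (fun g ↦ .ofAdd (residue (gridCoord g))) <| by
    rintro ⟨g, hg⟩ ⟨h, hh⟩
    obtain ⟨a, b, c, hbc, rfl⟩ := exists_eq_gridAff_of_mem_G6 hg
    obtain ⟨a', b', c', hbc', rfl⟩ := exists_eq_gridAff_of_mem_G6 hh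
    simp only [MulMemClass.mk_mul_mk, gridAff_mul, gridCoord_gridAff,
      residue_twisted_add hbc hbc', ofAdd_add]

lemma residueHom_apply {g : G6} {a b c : ℤ} (hg : (g : Aff3) = gridAff a b c) :
    residueHom g = .ofAdd (residue ![a, b, c]) := by
  simp only [residueHom, MonoidHom.mk'_apply, hg, gridCoord_gridAff]

lemma residueHom_surjective : Function.Surjective residueHom := by
  have hx : residueHom xg = .ofAdd (1, 0) := by
    simp [residueHom_apply (g := xg) affx_eq_gridAff, residue]
  have hy : residueHom yg = .ofAdd (0, 1) := by
    simp [residueHom_apply (g := yg) affy_eq_gridAff, residue]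
  intro r
  obtain ⟨⟨p, q⟩, rfl⟩ := Multiplicative.ofAdd.surjective r
  refine ⟨xg ^ p.val * yg ^ q.val, ?_⟩
  rw [map_mul, map_pow, map_pow, hx, hy, ← ofAdd_nsmul, ← ofAdd_nsmul, ← ofAdd_add]
  simp

lemma exists_of_residue_eq_zero {a b c : ℤ} (hbc : Even (b - c)) (h : residue ![a, b, c] = 0) :
    ∃ u v w : ℤ, a = 2 * (2 * u + w) ∧ b = 2 * (2 * v + w) ∧ c = 2 * -w := by
  obtain ⟨hp, hq⟩ := Prod.ext_iff.1 h
  simp only [residue, Matrix.cons_val] at hp hq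
  norm_cast at hp hq
  simp only [Prod.fst_zero, Prod.snd_zero, ZMod.intCast_zmod_eq_zero_iff_dvd] at hp hq
  have two_dvd_four : (2 : ℤ) ∣ 4 := by decide
  have ha : Even a := by
    have parity := even_iff_two_dvd.2 (two_dvd_four.trans hp)
    simp only [Int.even_add, Int.even_mul, Int.even_pow] at parity
    tauto
  have hb : Even b := by
    have parity := even_iff_two_dvd.2 (two_dvd_four.trans hq)
    simp only [Int.even_add, Int.even_pow] at parity
    tauto
  have hc : Even c := (Int.even_sub.1 hbc).1 hb
  obtain ⟨k, rfl⟩ := ha.two_dvd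
  obtain ⟨l, rfl⟩ := hb.two_dvd
  obtain ⟨m, rfl⟩ := hc.two_dvd
  obtain ⟨r, hr⟩ := hp
  obtain ⟨s, hs⟩ := hq
  exact ⟨r - m ^ 2 - 2 * k * m, s - m ^ 2, -m, by linear_combination hr, by linear_combination hs,
    by ring⟩

end Residue

section Lattices

open Multiplicative
open scoped commutatorElement

/-- The translation by an integer vector; these translations make up `T`. -/
noncomputable def translation : Multiplicative (ℤ × ℤ × ℤ) →* Aff3 :=
  MonoidHom.mk' (fun t ↦ gridAff (2 * t.toAdd.1) (2 * t.toAdd.2.1) (2 * t.toAdd.2.2)) <| by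
    intro s t
    simp [gridAff_mul, Int.negOnePow_add, mul_add]

lemma translation_ofAdd (a b c : ℤ) :
    translation (ofAdd (a, b, c)) = gridAff (2 * a) (2 * b) (2 * c) :=
  rfl

lemma translation_injective : Function.Injective translation := by
  intro s t h
  obtain ⟨h₁, h₂, h₃⟩ := gridAff_inj.1 h
  rw [mul_right_inj' two_ne_zero] at h₁ h₂ h₃
  exact toAdd.injective (Prod.ext h₁ (Prod.ext h₂ h₃))

/-- The inclusion of the lattice spanned by `(2, 0, 0)`, `(0, 2, 0)` and `(1, 1, -1)`, the vectors
of the translations `x⁴`, `y⁴` and `x²y²z⁻²`. -/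
def commutatorLattice : Multiplicative (ℤ × ℤ × ℤ) →* Multiplicative (ℤ × ℤ × ℤ) :=
  MonoidHom.mk'
    (fun t ↦ ofAdd (2 * t.toAdd.1 + t.toAdd.2.2, 2 * t.toAdd.2.1 + t.toAdd.2.2, -t.toAdd.2.2)) <| by
    intro s t
    rw [← ofAdd_add]
    refine congrArg ofAdd (Prod.ext ?_ (Prod.ext ?_ ?_)) <;>
      simp only [toAdd_mul, Prod.fst_add, Prod.snd_add] <;> ring

lemma commutatorLattice_ofAdd (a b c : ℤ) :
    commutatorLattice (ofAdd (a, b, c)) = ofAdd (2 * a + c, 2 * b + c, -c) :=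
  rfl

lemma commutatorLattice_injective : Function.Injective commutatorLattice := by
  intro s t h
  have coordinates := ofAdd.injective h
  simp only [Prod.mk.injEq] at coordinates
  refine toAdd.injective (Prod.ext ?_ (Prod.ext ?_ ?_)) <;> omega

lemma affx_sq : affx ^ 2 = translation (ofAdd (1, 0, 0)) := by
  simp [affx_eq_gridAff, sq, gridAff_mul, translation_ofAdd]

lemma affy_sq : affy ^ 2 = translation (ofAdd (0, 1, 0)) := by
  simp [affy_eq_gridAff, sq, gridAff_mul, translation_ofAdd]

lemma affz_sq : affz ^ 2 = translation (ofAdd (0, 0, 1)) := by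
  simp [affz_eq_gridAff, sq, gridAff_mul, translation_ofAdd]

lemma TT_eq_range : TT = translation.range := by
  refine le_antisymm ?_ (le_inf ?_ ?_)
  · rintro g ⟨hg, hlin⟩
    obtain ⟨a, b, c, hbc, rfl⟩ := exists_eq_gridAff_of_mem_G6 hg
    obtain ⟨ha, hb⟩ := linearHom_gridAff_eq_one_iff.1 hlin
    have hc : Even c := (Int.even_sub.1 hbc).1 hb
    obtain ⟨u, rfl⟩ := ha.two_dvd
    obtain ⟨v, rfl⟩ := hb.two_dvd
    obtain ⟨w, rfl⟩ := hc.two_dvd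
    exact ⟨ofAdd (u, v, w), rfl⟩
  · refine range_le_of_basis_mem ?_ ?_ ?_
    · exact affx_sq ▸ pow_mem affx_mem 2
    · exact affy_sq ▸ pow_mem affy_mem 2
    · exact affz_sq ▸ pow_mem (mul_mem affx_mem affy_mem) 2
  · rintro _ ⟨t, rfl⟩
    exact linearHom_gridAff_eq_one_iff.2 ⟨even_two_mul _, even_two_mul _⟩

lemma affx_pow_four : affx ^ 4 = translation (commutatorLattice (ofAdd (1, 0, 0))) := by
  rw [pow_mul affx 2 2, affx_sq, ← map_pow]
  rfl

lemma affy_pow_four : affy ^ 4 = translation (commutatorLattice (ofAdd (0, 1, 0))) := by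
  rw [pow_mul affy 2 2, affy_sq, ← map_pow]
  rfl

lemma affx_sq_mul_affy_sq_mul_affz_inv_sq :
    affx ^ 2 * affy ^ 2 * affz⁻¹ ^ 2 = translation (commutatorLattice (ofAdd (0, 0, 1))) := by
  rw [inv_pow, affx_sq, affy_sq, affz_sq, ← map_inv, ← map_mul, ← map_mul]
  rfl

lemma affx_pow_four_eq_commutator : affx ^ 4 = ⁅affx ^ 2, affy⁆ := by
  rw [affx_pow_four, affx_sq, affy_eq_gridAff, commutatorLattice_ofAdd, commutatorElement_def]
  simp only [translation_ofAdd, gridAff_mul, gridAff_inv]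
  rfl

lemma affy_pow_four_eq_commutator : affy ^ 4 = ⁅affy ^ 2, affx⁆ := by
  rw [affy_pow_four, affy_sq, affx_eq_gridAff, commutatorLattice_ofAdd, commutatorElement_def]
  simp only [translation_ofAdd, gridAff_mul, gridAff_inv]
  rfl

lemma affx_sq_mul_affy_sq_mul_affz_inv_sq_eq_commutator :
    affx ^ 2 * affy ^ 2 * affz⁻¹ ^ 2 = ⁅affy, affx⁻¹⁆ := by
  rw [affx_sq_mul_affy_sq_mul_affz_inv_sq, affx_eq_gridAff, affy_eq_gridAff,
    commutatorLattice_ofAdd, commutatorElement_def]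
  simp only [translation_ofAdd, gridAff_mul, gridAff_inv]
  rfl

lemma range_commutatorLattice_le_G6' : (translation.comp commutatorLattice).range ≤ G6' := by
  refine range_le_of_basis_mem ?_ ?_ ?_
  · change translation _ ∈ _
    rw [← affx_pow_four, affx_pow_four_eq_commutator]
    exact Subgroup.commutator_mem_commutator (pow_mem affx_mem 2) affy_mem
  · change translation _ ∈ _
    rw [← affy_pow_four, affy_pow_four_eq_commutator]
    exact Subgroup.commutator_mem_commutator (pow_mem affy_mem 2) affx_mem
  · change translation _ ∈ _
    rw [← affx_sq_mul_affy_sq_mul_affz_inv_sq, affx_sq_mul_affy_sq_mul_affz_inv_sq_eq_commutator]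
    exact Subgroup.commutator_mem_commutator affy_mem (inv_mem affx_mem)

lemma G6'_le_map_ker_residueHom : G6' ≤ residueHom.ker.map G6.subtype := by
  rw [G6', ← Subgroup.map_subtype_commutator]
  exact Subgroup.map_mono (Abelianization.commutator_subset_ker residueHom)

lemma map_ker_residueHom_le_range :
    residueHom.ker.map G6.subtype ≤ (translation.comp commutatorLattice).range := by
  rintro _ ⟨⟨g, hg⟩, hker, rfl⟩
  obtain ⟨a, b, c, hbc, rfl⟩ := exists_eq_gridAff_of_mem_G6 hg
  rw [SetLike.mem_coe, MonoidHom.mem_ker, residueHom_apply rfl, ofAdd_eq_one] at hker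
  obtain ⟨u, v, w, rfl, rfl, rfl⟩ := exists_of_residue_eq_zero hbc hker
  exact ⟨ofAdd (u, v, w), rfl⟩

lemma G6'_eq_range : G6' = (translation.comp commutatorLattice).range :=
  le_antisymm (G6'_le_map_ker_residueHom.trans map_ker_residueHom_le_range)
    range_commutatorLattice_le_G6'

lemma ker_residueHom : residueHom.ker = G6'.subgroupOf G6 := by
  rw [le_antisymm G6'_le_map_ker_residueHom
    (map_ker_residueHom_le_range.trans range_commutatorLattice_le_G6'), Subgroup.subgroupOf,
    Subgroup.comap_map_eq_self_of_injective G6.subtype_injective]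

lemma twoT_eq_range : twoT = (translation.comp (powMonoidHom 2)).range := by
  rw [twoT, TT_eq_range, closure_pow_image_range]

lemma translation_mem_G6'_iff {a b c : ℤ} :
    translation (ofAdd (a, b, c)) ∈ G6' ↔ Even (a + c) ∧ Even (b + c) := by
  rw [G6'_eq_range]
  constructor
  · rintro ⟨t, h⟩
    obtain ⟨⟨u, v, w⟩, rfl⟩ := ofAdd.surjective t
    replace h := translation_injective h
    rw [commutatorLattice_ofAdd, ofAdd.injective.eq_iff, Prod.mk.injEq, Prod.mk.injEq] at h
    exact ⟨⟨u, by omega⟩, ⟨v, by omega⟩⟩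
  · rintro ⟨⟨u, hu⟩, ⟨v, hv⟩⟩
    refine ⟨ofAdd (u, v, -c), congrArg translation ?_⟩
    rw [commutatorLattice_ofAdd, ofAdd.injective.eq_iff, Prod.mk.injEq, Prod.mk.injEq]
    omega

lemma translation_mem_twoT_iff {a b c : ℤ} :
    translation (ofAdd (a, b, c)) ∈ twoT ↔ Even a ∧ Even b ∧ Even c := by
  rw [twoT_eq_range]
  constructor
  · rintro ⟨t, h⟩
    obtain ⟨⟨u, v, w⟩, rfl⟩ := ofAdd.surjective t
    replace h : ofAdd (u + u, v + v, w + w) = ofAdd (a, b, c) :=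
      (pow_two _).symm.trans (translation_injective h)
    rw [ofAdd.injective.eq_iff, Prod.mk.injEq, Prod.mk.injEq] at h
    exact ⟨⟨u, h.1.symm⟩, ⟨v, h.2.1.symm⟩, ⟨w, h.2.2.symm⟩⟩
  · rintro ⟨⟨u, rfl⟩, ⟨v, rfl⟩, ⟨w, rfl⟩⟩
    exact ⟨ofAdd (u, v, w), congrArg translation (pow_two _)⟩

/-- The coordinates on `G₆′` with respect to the basis `x⁴`, `y⁴`, `x²y²z⁻²`. -/
noncomputable def commutatorEquiv : Multiplicative (ℤ × ℤ × ℤ) ≃* G6' :=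
  (MonoidHom.ofInjective (translation_injective.comp commutatorLattice_injective :
    Function.Injective (translation.comp commutatorLattice))).trans
    (MulEquiv.subgroupCongr G6'_eq_range.symm)

lemma coe_commutatorEquiv (t : Multiplicative (ℤ × ℤ × ℤ)) :
    (commutatorEquiv t : Aff3) = translation (commutatorLattice t) :=
  rfl

/-- The coordinates on `T` with respect to the standard basis of `ℤ³`. -/
noncomputable def translationEquiv : Multiplicative (ℤ × ℤ × ℤ) ≃* TT :=
  (MonoidHom.ofInjective translation_injective).trans (MulEquiv.subgroupCongr TT_eq_range.symm)

lemma coe_translationEquiv (t : Multiplicative (ℤ × ℤ × ℤ)) :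
    (translationEquiv t : Aff3) = translation t :=
  rfl

/-- The map `(a, b, c) ↦ (a + c, b + c)` modulo `2`, which cuts `G₆′` out of `T`. -/
def translationResidue : Multiplicative (ℤ × ℤ × ℤ) →* Multiplicative (ZMod 2 × ZMod 2) :=
  MonoidHom.mk'
    (fun t ↦ ofAdd (((t.toAdd.1 + t.toAdd.2.2 : ℤ) : ZMod 2),
      ((t.toAdd.2.1 + t.toAdd.2.2 : ℤ) : ZMod 2))) <| by
    intro s t
    rw [← ofAdd_add]
    simp only [toAdd_mul, Prod.fst_add, Prod.snd_add, Int.cast_add, Prod.mk_add_mk]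
    ring_nf

/-- The map `(a, b, c) ↦ c` modulo `2`, which cuts `2T` out of `G₆′`. -/
def commutatorResidue : Multiplicative (ℤ × ℤ × ℤ) →* Multiplicative (ZMod 2) :=
  MonoidHom.mk' (fun t ↦ ofAdd ((t.toAdd.2.2 : ℤ) : ZMod 2)) <| by
    intro s t
    simp

lemma exists_surjective_TT_ker_eq_G6' : ∃ ψ : TT →* Multiplicative (ZMod 2 × ZMod 2),
    Function.Surjective ψ ∧ ψ.ker = G6'.subgroupOf TT := by
  refine exists_surjective_ker_eq_subgroupOf translationEquiv (χ := translationResidue) ?_ ?_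
  · intro r
    obtain ⟨⟨p, q⟩, rfl⟩ := ofAdd.surjective r
    refine ⟨ofAdd (p.val, q.val, 0), congrArg ofAdd ?_⟩
    simp
  · intro t
    obtain ⟨⟨a, b, c⟩, rfl⟩ := ofAdd.surjective t
    rw [coe_translationEquiv, translation_mem_G6'_iff]
    exact Prod.ext_iff.trans
      (and_congr ZMod.intCast_eq_zero_iff_even ZMod.intCast_eq_zero_iff_even)

lemma exists_surjective_G6'_ker_eq_twoT : ∃ ψ : G6' →* Multiplicative (ZMod 2),
    Function.Surjective ψ ∧ ψ.ker = twoT.subgroupOf G6' := by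
  refine exists_surjective_ker_eq_subgroupOf commutatorEquiv (χ := commutatorResidue) ?_ ?_
  · intro r
    refine ⟨ofAdd (0, 0, r.toAdd.val), toAdd.injective ?_⟩
    simp [commutatorResidue]
  · intro t
    obtain ⟨⟨a, b, c⟩, rfl⟩ := ofAdd.surjective t
    rw [coe_commutatorEquiv, commutatorLattice_ofAdd, translation_mem_twoT_iff, even_neg]
    refine (ZMod.intCast_eq_zero_iff_even (n := c)).trans ⟨fun hc ↦ ⟨?_, ?_, hc⟩, fun h ↦ h.2.2⟩
    · exact (even_two_mul a).add hc
    · exact (even_two_mul b).add hc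

lemma G6'_le_TT : G6' ≤ TT := by
  rw [G6'_eq_range, TT_eq_range, MonoidHom.range_comp]
  exact Subgroup.map_le_range _ _

lemma twoT_le_G6' : twoT ≤ G6' := by
  rw [twoT, Subgroup.closure_le, TT_eq_range]
  rintro _ ⟨_, ⟨t, rfl⟩, rfl⟩
  obtain ⟨⟨a, b, c⟩, rfl⟩ := ofAdd.surjective t
  have square : translation (ofAdd (a, b, c)) ^ 2 = translation (ofAdd (a + a, b + b, c + c)) := by
    rw [pow_two, ← map_mul]
    rfl
  change translation (ofAdd (a, b, c)) ^ 2 ∈ G6'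
  rw [square, translation_mem_G6'_iff]
  exact ⟨(Even.add_self a).add (.add_self c), (Even.add_self b).add (.add_self c)⟩

end Lattices

/-- The commutator subgroup `G₆′` of `G₆` is free abelian of rank 3 with
basis `{x⁴, y⁴, x²y²z⁻²}`, and the abelianization `G₆/G₆′` is isomorphic to `(ℤ/4ℤ)²`.
Moreover `2T < G₆′ < T`, with `T/G₆′ ≅ (ℤ/2ℤ)²` and `G₆′/2T ≅ ℤ/2ℤ`. -/
theorem statement5 :
    (∃ φ : Multiplicative (ℤ × ℤ × ℤ) ≃* G6',
      ((φ (Multiplicative.ofAdd (1, 0, 0)) : Aff3) = affx ^ 4 ∧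
       (φ (Multiplicative.ofAdd (0, 1, 0)) : Aff3) = affy ^ 4 ∧
       (φ (Multiplicative.ofAdd (0, 0, 1)) : Aff3) = affx ^ 2 * affy ^ 2 * affz⁻¹ ^ 2)) ∧
    (∃ ψ : G6 →* Multiplicative (ZMod 4 × ZMod 4),
      Function.Surjective ψ ∧ ψ.ker = G6'.subgroupOf G6) ∧
    twoT < G6' ∧ G6' < TT ∧
    (∃ ψ : TT →* Multiplicative (ZMod 2 × ZMod 2),
      Function.Surjective ψ ∧ ψ.ker = G6'.subgroupOf TT) ∧
    (∃ ψ : G6' →* Multiplicative (ZMod 2),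
      Function.Surjective ψ ∧ ψ.ker = twoT.subgroupOf G6') := by
  exact
    ⟨⟨commutatorEquiv, affx_pow_four.symm, affy_pow_four.symm,
        affx_sq_mul_affy_sq_mul_affz_inv_sq.symm⟩,
      ⟨residueHom, residueHom_surjective, ker_residueHom⟩,
      lt_of_surjective_of_ker_eq_subgroupOf twoT_le_G6' exists_surjective_G6'_ker_eq_twoT,
      lt_of_surjective_of_ker_eq_subgroupOf G6'_le_TT exists_surjective_TT_ker_eq_G6',
      exists_surjective_TT_ker_eq_G6', exists_surjective_G6'_ker_eq_twoT⟩
end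

section
/- The outer automorphism group Out(G₆) = Aut(G₆)/Inn(G₆) of the Hantzsche–Wendt group G₆ is a finite group of order 96. -/
/-!
Up to a similarity of `ℝ³`, the group `G₆` consists of the elements of `A = (ℤ ⋊ {±1})³` for which
the sign of each coordinate is the parity of the translation in the preceding one and the product of
the signs is `1`. This is the kernel of a surjection from `A` to a group of order `16`, hence a
normal subgroup of index `16`.

Automorphisms permute the three nontrivial characters `G₆ → {±1}`, which are the diagonal entries
of the linear part, and every permutation occurs. An automorphism fixing these characters is
conjugation by a unique element of `A`: in each coordinate, two of the generators act by the unit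
translation and by the reflection in `0`; the automorphism changes them into a translation by `±1`
and a reflection in some integer, and exactly one element of `ℤ ⋊ {±1}` conjugates the first pair
to the second. So `Inn G₆` has index `16` in the group of automorphisms fixing the characters, which
itself has index `6` in `Aut G₆`.
-/

open Equiv Subgroup

section Aut

variable {G H : Type*} [Group G] [Group H]

variable (G) in
lemma normal_range_conj : (MulAut.conj : G →* MulAut G).range.Normal where
  conj_mem := by
    rintro _ ⟨g, rfl⟩ f
    exact ⟨f g, by ext h; simp [MulAut.conj_apply]⟩

lemma map_congr_range_conj (e : G ≃* H) :
    (MulAut.conj : G →* MulAut G).range.map (MulAut.congr e : MulAut G →* MulAut H) =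
      (MulAut.conj : H →* MulAut H).range := by
  have conj_equivariant (g : G) : MulAut.congr e (MulAut.conj g) = MulAut.conj (e g) := by
    ext h
    simp [MulAut.congr, MulAut.conj_apply]
  ext f
  constructor
  · rintro ⟨_, ⟨g, rfl⟩, rfl⟩
    exact ⟨e g, (conj_equivariant g).symm⟩
  · rintro ⟨h, rfl⟩
    exact ⟨_, ⟨e.symm h, rfl⟩, by simp [conj_equivariant]⟩

lemma range_conj_eq_map_conjNormal (N : Subgroup G) [N.Normal] :
    (MulAut.conj : N →* MulAut N).range = N.map MulAut.conjNormal := by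
  ext f
  constructor
  · rintro ⟨n, rfl⟩
    exact ⟨n, n.2, MulAut.conjNormal_val⟩
  · rintro ⟨n, hn, rfl⟩
    exact ⟨⟨n, hn⟩, MulAut.conjNormal_val.symm⟩

/-- The permutation action of `Aut G` on the nontrivial `M`-valued characters of `G`, in which `f`
sends `χ` to `χ ∘ f⁻¹`. -/
def characterPerm (G M : Type*) [Group G] [CommGroup M] :
    MulAut G →* Perm {χ : G →* M // χ ≠ 1} where
  toFun f := Perm.subtypePerm f.monoidHomCongrLeft.toEquiv fun _ =>
    EmbeddingLike.map_ne_one_iff (f := f.monoidHomCongrLeft (N := M))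
  map_one' := rfl
  map_mul' _ _ := rfl

end Aut

/-- The affine transformation `t ↦ sign * t + trans` of `ℤ`; these form the infinite dihedral
group. -/
@[ext]
structure IntAffine where
  trans : ℤ
  sign : ℤˣ

namespace IntAffine

instance : Mul IntAffine := ⟨fun d e => ⟨d.trans + d.sign * e.trans, d.sign * e.sign⟩⟩
instance : One IntAffine := ⟨⟨0, 1⟩⟩
instance : Inv IntAffine := ⟨fun d => ⟨-(d.sign * d.trans), d.sign⟩⟩

@[simp] lemma trans_mul (d e : IntAffine) : (d * e).trans = d.trans + d.sign * e.trans := rfl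
@[simp] lemma sign_mul (d e : IntAffine) : (d * e).sign = d.sign * e.sign := rfl
@[simp] lemma trans_one : (1 : IntAffine).trans = 0 := rfl
@[simp] lemma sign_one : (1 : IntAffine).sign = 1 := rfl
@[simp] lemma trans_inv (d : IntAffine) : d⁻¹.trans = -(d.sign * d.trans) := rfl
@[simp] lemma sign_inv (d : IntAffine) : d⁻¹.sign = d.sign := rfl

instance : Group IntAffine := Group.ofLeftAxioms
  (fun _ _ _ => by ext <;> simp [mul_add, mul_assoc, add_assoc])
  (fun _ => by ext <;> simp)
  (fun _ => by ext <;> simp)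

/-- The linear part of an affine transformation of `ℤ`. -/
def linearPart : IntAffine →* ℤˣ where
  toFun := sign
  map_one' := rfl
  map_mul' _ _ := rfl

/-- The parity of the translation part, which is multiplicative because `-1` and `1` are congruent
modulo `2`. -/
def transParity : IntAffine →* ℤˣ where
  toFun d := d.trans.negOnePow
  map_one' := Int.negOnePow_zero
  map_mul' d e := by
    rcases Int.units_eq_one_or d.sign with h | h <;>
      simp [h, Int.negOnePow_add, Int.negOnePow_sub, ← sub_eq_add_neg]

@[simp] lemma linearPart_apply (d : IntAffine) : linearPart d = d.sign := rfl
@[simp] lemma transParity_apply (d : IntAffine) : transParity d = d.trans.negOnePow := rfl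

@[simp] lemma sign_zpow (d : IntAffine) (m : ℤ) : (d ^ m).sign = d.sign ^ m :=
  map_zpow linearPart d m

lemma trans_zpow {d : IntAffine} (hd : d.sign = 1) (m : ℤ) : (d ^ m).trans = m * d.trans := by
  induction m with
  | zero => simp
  | succ n ih =>
    rw [zpow_add_one, trans_mul, ih, sign_zpow, hd, one_zpow, Units.val_one]
    ring
  | pred n ih =>
    rw [zpow_sub_one, trans_mul, ih, sign_zpow, trans_inv, hd, one_zpow, Units.val_one]
    ring

lemma mul_self_of_sign_eq_neg_one {d : IntAffine} (hd : d.sign = -1) : d * d = 1 := by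
  ext <;> simp [hd]

lemma conj_translation (d : IntAffine) (m : ℤ) : d * ⟨m, 1⟩ * d⁻¹ = ⟨d.sign * m, 1⟩ := by
  rcases Int.units_eq_one_or d.sign with h | h <;> ext <;> simp [h]

lemma conj_reflection (d : IntAffine) (m : ℤ) :
    d * ⟨m, -1⟩ * d⁻¹ = ⟨2 * d.trans + d.sign * m, -1⟩ := by
  rcases Int.units_eq_one_or d.sign with h | h <;> ext <;> simp [h] <;> ring

/-- Conjugation by the translation `t ↦ t + 1 / 2`. -/
def halfShift : MulAut IntAffine where
  toFun d := ⟨d.trans + if d.sign = 1 then 0 else 1, d.sign⟩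
  invFun d := ⟨d.trans - if d.sign = 1 then 0 else 1, d.sign⟩
  left_inv d := by simp
  right_inv d := by simp
  map_mul' d e := by
    rcases Int.units_eq_one_or d.sign with hd | hd <;>
      rcases Int.units_eq_one_or e.sign with he | he <;>
      ext <;> simp [hd, he] <;> ring

lemma negOnePow_trans_halfShift (d : IntAffine) :
    (halfShift d).trans.negOnePow = d.trans.negOnePow * d.sign := by
  rcases Int.units_eq_one_or d.sign with h | h <;> simp [halfShift, h, Int.negOnePow_succ]

end IntAffine

/-- The action of `(ℤ ⋊ {±1})³` on `ℝ³` obtained by embedding `ℤ` in the `i`-th coordinate axis by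
`t ↦ c i + r i * t`. -/
noncomputable def latticeAction (r c : V3) : (Fin 3 → IntAffine) →* Aff3 :=
  MonoidHom.mk' (fun g =>
    (diagLin (fun i => (g i).sign) fun i => by norm_cast; simp).toAffineEquiv.trans
      (AffineEquiv.constVAdd ℝ V3 fun i => r i * (g i).trans + (1 - (g i).sign) * c i))
    fun g h => by
      ext w i
      simp [diagLin, AffineEquiv.mul_def]
      ring

lemma latticeAction_apply (r c : V3) (g : Fin 3 → IntAffine) (w : V3) (i : Fin 3) :
    latticeAction r c g w i = r i * (g i).trans + (1 - (g i).sign) * c i + (g i).sign * w i := rfl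

lemma latticeAction_injective {r : V3} (hr : ∀ i, r i ≠ 0) (c : V3) :
    Function.Injective (latticeAction r c) := by
  refine (injective_iff_map_eq_one _).2 fun g hg => funext fun i => ?_
  have map_eq_self (w : V3) :
      r i * (g i).trans + (1 - (g i).sign) * c i + (g i).sign * w i = w i :=
    congrFun (DFunLike.congr_fun hg w) i
  have trans_eq_zero : (g i).trans = 0 := by
    have : r i * (g i).trans = 0 := by linarith [map_eq_self c]
    simpa [hr] using this
  have sign_eq_one : (g i).sign = 1 := by
    have map_add_one : r i * (g i).trans + (1 - (g i).sign) * c i + (g i).sign * (c i + 1) =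
      c i + 1 := map_eq_self (c + 1)
    have : ((g i).sign : ℝ) = 1 := by linarith [map_eq_self c]
    simpa using this
  exact IntAffine.ext trans_eq_zero sign_eq_one

open IntAffine

/-- The homomorphism on `(ℤ ⋊ {±1})³` whose kernel is the model of the Hantzsche–Wendt group: it
compares the sign in each coordinate with the parity of the translation in the preceding one, and
records the orientation. -/
def parityDefect : (Fin 3 → IntAffine) →* (Fin 3 → ℤˣ) × ℤˣ :=
  (MonoidHom.pi fun i => linearPart.comp (Pi.evalMonoidHom _ i) *
    transParity.comp (Pi.evalMonoidHom _ (i - 1))).prod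
      (∏ i, linearPart.comp (Pi.evalMonoidHom _ i))

/-- An integral model of the Hantzsche–Wendt group, as a group of affine transformations of `ℤ³`
with diagonal linear part. Compared with `G6`, coordinates are doubled, the third one is reflected
and the origin is shifted, which makes the model invariant under cyclic permutations of the
coordinates. -/
def hantzscheWendt : Subgroup (Fin 3 → IntAffine) := parityDefect.ker

namespace hantzscheWendt

instance : hantzscheWendt.Normal := parityDefect.normal_ker

lemma mem_iff {g : Fin 3 → IntAffine} : g ∈ hantzscheWendt ↔
    (∀ i, (g i).sign = (g (i - 1)).trans.negOnePow) ∧ ∏ i, (g i).sign = 1 := by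
  simp [hantzscheWendt, MonoidHom.mem_ker, parityDefect, Prod.ext_iff, funext_iff,
    mul_eq_one_iff_eq_inv, Int.units_inv_eq_self]

lemma parityDefect_surjective : Function.Surjective parityDefect := by
  rintro ⟨u, v⟩
  have negOnePow_surjective (w : ℤˣ) : ∃ n : ℤ, n.negOnePow = w := by
    rcases Int.units_eq_one_or w with rfl | rfl
    · exact ⟨0, Int.negOnePow_zero⟩
    · exact ⟨1, Int.negOnePow_one⟩
  let ε : Fin 3 → ℤˣ := Pi.mulSingle 0 v
  choose l hl using fun i => negOnePow_surjective (u (i + 1) * ε (i + 1))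
  refine ⟨fun i => ⟨l i, ε i⟩, Prod.ext (funext fun i => ?_) ?_⟩
  · simp [parityDefect, hl, mul_left_comm]
  · simp [parityDefect, ε]

lemma index_eq : hantzscheWendt.index = 16 := by
  rw [hantzscheWendt, index_ker, MonoidHom.range_eq_top.2 parityDefect_surjective, card_top,
    Nat.card_eq_fintype_card]
  rfl

/-- The action of the model on the `i`-th coordinate. -/
def coord (i : Fin 3) : hantzscheWendt →* IntAffine :=
  (Pi.evalMonoidHom _ i).comp hantzscheWendt.subtype

/-- The diagonal entries of the linear part, as characters of the model. -/
def axisSign (i : Fin 3) : hantzscheWendt →* ℤˣ := linearPart.comp (coord i)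

lemma coord_apply (i : Fin 3) (g : hantzscheWendt) : coord i g = g.1 i := rfl
lemma axisSign_apply (i : Fin 3) (g : hantzscheWendt) : axisSign i g = (coord i g).sign := rfl

lemma ext_coord {g h : hantzscheWendt} (eq_coord : ∀ i, coord i g = coord i h) : g = h :=
  Subtype.ext (funext eq_coord)

lemma axisSign_add_one (i : Fin 3) (g : hantzscheWendt) :
    axisSign (i + 1) g = (coord i g).trans.negOnePow := by
  simpa [axisSign_apply, coord_apply] using (mem_iff.1 g.2).1 (i + 1)

lemma prod_axisSign (g : hantzscheWendt) : ∏ i, axisSign i g = 1 := (mem_iff.1 g.2).2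

/-- The screw motion with axis `i`: the half-turn about that axis followed by a translation. -/
def screw (i : Fin 3) : hantzscheWendt :=
  ⟨fun j => ⟨if j + 1 = i then 0 else 1, if j = i then 1 else -1⟩, by
    rw [mem_iff]
    fin_cases i <;> decide⟩

lemma coord_screw_self (i : Fin 3) : coord i (screw i) = ⟨1, 1⟩ := by
  fin_cases i <;> rfl

lemma coord_screw_add_one (i : Fin 3) : coord i (screw (i + 1)) = ⟨0, -1⟩ := by
  fin_cases i <;> rfl

lemma axisSign_screw (i j : Fin 3) : axisSign i (screw j) = if i = j then 1 else -1 := rfl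

lemma screw_add_two (i : Fin 3) : screw (i + 2) = (screw i * screw (i + 1))⁻¹ := by
  refine ext_coord fun j => ?_
  fin_cases i <;> fin_cases j <;> rfl

lemma eq_one_or_exists_of_prod_eq_one : ∀ ε : Fin 3 → ℤˣ, ∏ i, ε i = 1 →
    ε = 1 ∨ ∃ i, ∀ j, ε j = if i = j then 1 else -1 := by
  decide

lemma mul_self_eq_zpow {i : Fin 3} {g : hantzscheWendt}
    (hg : ∀ j, axisSign j g = axisSign j (screw i)) :
    g * g = (screw i * screw i) ^ (coord i g).trans := by
  refine ext_coord fun j => ?_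
  have hj := hg j
  rw [axisSign_screw, axisSign_apply] at hj
  rw [map_zpow, map_mul, map_mul]
  split_ifs at hj with hji
  · subst hji
    rw [coord_screw_self]
    ext
    · rw [trans_zpow (by simp)]
      simp [hj, mul_two]
    · simp [hj]
  · rw [mul_self_of_sign_eq_neg_one hj,
      mul_self_of_sign_eq_neg_one ((axisSign_screw j i).trans (if_neg hji)), one_zpow]

lemma eq_prod_zpow_of_axisSign_eq_one {g : hantzscheWendt} (hg : ∀ i, axisSign i g = 1) :
    ∃ m : Fin 3 → ℤ, g = (screw 0 * screw 0) ^ m 0 * (screw 1 * screw 1) ^ m 1 *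
      (screw 2 * screw 2) ^ m 2 := by
  have even_trans (i : Fin 3) : Even (coord i g).trans := by
    rw [← Int.negOnePow_eq_one_iff, ← axisSign_add_one, hg]
  choose m hm using fun i => even_iff_exists_two_mul.1 (even_trans i)
  have coord_sq_self (i : Fin 3) : coord i (screw i * screw i) ^ m i = coord i g := by
    ext
    · rw [trans_zpow] <;> simp [coord_screw_self, hm, mul_comm]
    · simp [coord_screw_self, ← axisSign_apply, hg]
  have coord_sq_of_ne (i j : Fin 3) (hij : i ≠ j) : coord i (screw j * screw j) = 1 := by
    rw [map_mul, mul_self_of_sign_eq_neg_one ((axisSign_screw i j).trans (if_neg hij))]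
  refine ⟨m, ext_coord fun i => ?_⟩
  simp only [map_mul, map_zpow] at coord_sq_self coord_sq_of_ne ⊢
  fin_cases i <;> simp [coord_sq_self, coord_sq_of_ne]

lemma closure_range_screw : closure (Set.range screw) = ⊤ := by
  have screw_mem (i : Fin 3) : screw i ∈ closure (Set.range screw) := subset_closure ⟨i, rfl⟩
  have mem_of_axisSign_eq_one (g : hantzscheWendt) (hg : ∀ i, axisSign i g = 1) :
      g ∈ closure (Set.range screw) := by
    obtain ⟨m, rfl⟩ := eq_prod_zpow_of_axisSign_eq_one hg
    have sq_zpow_mem (i : Fin 3) : (screw i * screw i) ^ m i ∈ closure (Set.range screw) :=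
      zpow_mem (mul_mem (screw_mem i) (screw_mem i)) (m i)
    exact mul_mem (mul_mem (sq_zpow_mem 0) (sq_zpow_mem 1)) (sq_zpow_mem 2)
  refine (eq_top_iff' _).2 fun g => ?_
  obtain h | ⟨i, h⟩ := eq_one_or_exists_of_prod_eq_one (axisSign · g) (prod_axisSign g)
  · exact mem_of_axisSign_eq_one g (congrFun h)
  · refine (Subgroup.mul_mem_cancel_right _ (screw_mem i)).1 (mem_of_axisSign_eq_one _ fun j => ?_)
    simp only [map_mul, h, axisSign_screw, eq_comm (a := j), Int.units_mul_self]

lemma closure_pair_screw (i : Fin 3) : closure {screw i, screw (i + 1)} = ⊤ := by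
  rw [eq_top_iff, ← closure_range_screw, closure_le]
  have h₀ : screw i ∈ closure {screw i, screw (i + 1)} := subset_closure (by simp)
  have h₁ : screw (i + 1) ∈ closure {screw i, screw (i + 1)} := subset_closure (by simp)
  rintro _ ⟨j, rfl⟩
  have fin_cases_add : ∀ i j : Fin 3, j = i ∨ j = i + 1 ∨ j = i + 2 := by decide
  obtain rfl | rfl | rfl := fin_cases_add i j
  · exact h₀
  · exact h₁
  · rw [screw_add_two]
    exact inv_mem (mul_mem h₀ h₁)

lemma hom_ext {M : Type*} [Group M] {φ ψ : hantzscheWendt →* M} (i : Fin 3)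
    (h₀ : φ (screw i) = ψ (screw i)) (h₁ : φ (screw (i + 1)) = ψ (screw (i + 1))) : φ = ψ :=
  MonoidHom.eq_of_eqOn_dense (closure_pair_screw i) (by rintro _ (rfl | rfl) <;> assumption)

lemma axisSign_ne_one (i : Fin 3) : axisSign i ≠ 1 := fun h => by
  simpa [axisSign_screw] using DFunLike.congr_fun h (screw (i + 1))

lemma axisSign_injective : Function.Injective axisSign := fun i j h => by
  simpa [axisSign_screw] using DFunLike.congr_fun h (screw j)

lemma exists_eq_axisSign {χ : hantzscheWendt →* ℤˣ} (hχ : χ ≠ 1) : ∃ i, χ = axisSign i := by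
  have prod_screw : ∏ j, χ (screw j) = 1 := by
    rw [Fin.prod_univ_three, show (2 : Fin 3) = 0 + 2 from rfl, screw_add_two,
      map_inv, map_mul]
    exact mul_inv_cancel _
  obtain h | ⟨i, h⟩ := eq_one_or_exists_of_prod_eq_one (χ <| screw ·) prod_screw
  · exact absurd (hom_ext 0 (congrFun h 0) (congrFun h 1)) hχ
  · exact ⟨i, hom_ext 0 (h 0) (h 1)⟩

/-- The nontrivial characters to `{±1}` correspond to the three coordinate axes. -/
noncomputable def axisEquiv : Fin 3 ≃ {χ : hantzscheWendt →* ℤˣ // χ ≠ 1} :=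
  Equiv.ofBijective (fun i => ⟨axisSign i, axisSign_ne_one i⟩)
    ⟨fun _ _ h => axisSign_injective (Subtype.ext_iff.1 h), fun ⟨_, hχ⟩ =>
      (exists_eq_axisSign hχ).imp fun _ h => Subtype.ext h.symm⟩

/-- The permutation of the three coordinate axes induced by an automorphism. -/
noncomputable def axisPerm : MulAut hantzscheWendt →* Perm (Fin 3) :=
  axisEquiv.symm.permCongrHom.toMonoidHom.comp (characterPerm hantzscheWendt ℤˣ)

lemma axisPerm_eq_iff {f : MulAut hantzscheWendt} {σ : Perm (Fin 3)} :
    axisPerm f = σ ↔ ∀ i g, axisSign (σ i) (f g) = axisSign i g := by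
  rw [Equiv.ext_iff]
  refine forall_congr' fun i => ?_
  calc axisPerm f i = σ i
      ↔ characterPerm _ ℤˣ f (axisEquiv i) = axisEquiv (σ i) := axisEquiv.symm_apply_eq
    _ ↔ (axisSign i).comp f.symm.toMonoidHom = axisSign (σ i) := Subtype.ext_iff
    _ ↔ ∀ g, axisSign i (f.symm g) = axisSign (σ i) g := DFunLike.ext_iff
    _ ↔ ∀ g, axisSign (σ i) (f g) = axisSign i g :=
      ⟨fun h g => by rw [← h, f.symm_apply_apply], fun h g => by rw [← h, f.apply_symm_apply]⟩

lemma exists_axisPerm_eq {σ : Perm (Fin 3)} {e : MulAut IntAffine}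
    (sign_e : ∀ d, (e d).sign = d.sign)
    (mem_iff_mem : ∀ g, MulEquiv.arrowCongr σ e g ∈ hantzscheWendt ↔ g ∈ hantzscheWendt) :
    ∃ f, axisPerm f = σ := by
  let E := MulEquiv.arrowCongr σ e
  have map_eq : hantzscheWendt.map E.toMonoidHom = hantzscheWendt := by
    ext g
    rw [mem_map_equiv, ← mem_iff_mem]
    exact iff_of_eq (congrArg (· ∈ hantzscheWendt) (E.apply_symm_apply g))
  refine ⟨(E.subgroupMap _).trans (MulEquiv.subgroupCongr map_eq), axisPerm_eq_iff.2 fun i g => ?_⟩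
  calc (e (g.1 (σ.symm (σ i)))).sign = (g.1 i).sign := by rw [sign_e, symm_apply_apply]

lemma arrowCongr_mem_iff {σ : Perm (Fin 3)} {e : MulAut IntAffine}
    (sign_e : ∀ d, (e d).sign = d.sign) {g : Fin 3 → IntAffine} :
    MulEquiv.arrowCongr σ e g ∈ hantzscheWendt ↔
      (∀ i, (g i).sign = (e (g (σ.symm (σ i - 1)))).trans.negOnePow) ∧ ∏ i, (g i).sign = 1 := by
  rw [mem_iff, ← σ.forall_congr_right, ← Equiv.prod_comp σ]
  simp [sign_e]

lemma exists_axisPerm_eq_finRotate : ∃ f, axisPerm f = finRotate 3 := by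
  have preserves_order : ∀ i, (finRotate 3).symm (finRotate 3 i - 1) = i - 1 := by decide
  refine exists_axisPerm_eq (e := 1) (fun _ => rfl) fun g => ?_
  simp only [arrowCongr_mem_iff (e := 1) (fun _ => rfl), preserves_order, MulAut.one_apply,
    mem_iff]

lemma exists_axisPerm_eq_swap : ∃ f, axisPerm f = swap 0 1 := by
  have reverses_order : ∀ i : Fin 3, (swap 0 1).symm (swap 0 1 i - 1) = i + 1 := by decide
  have parity_condition_iff : ∀ s p : Fin 3 → ℤˣ,
      ((∀ i, s i = p (i + 1) * s (i + 1)) ∧ ∏ i, s i = 1) ↔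
        (∀ i, s i = p (i - 1)) ∧ ∏ i, s i = 1 := by decide
  -- `halfShift` changes the parity of the translation exactly for reflections, which makes up for
  -- the reversed cyclic order of the axes.
  refine exists_axisPerm_eq (e := halfShift) (fun _ => rfl) fun g => ?_
  simp only [arrowCongr_mem_iff (e := halfShift) (fun _ => rfl), reverses_order,
    negOnePow_trans_halfShift, mem_iff]
  exact parity_condition_iff (fun i => (g i).sign) fun i => (g i).trans.negOnePow

lemma axisPerm_surjective : Function.Surjective axisPerm := by
  rw [← MonoidHom.range_eq_top, eq_top_iff,
    ← Perm.closure_cycle_adjacent_swap (isCycle_finRotate (n := 1)) support_finRotate 0, closure_le]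
  rintro _ (rfl | rfl)
  · exact exists_axisPerm_eq_finRotate
  · exact exists_axisPerm_eq_swap

lemma index_ker_axisPerm : axisPerm.ker.index = 6 := by
  rw [index_ker, MonoidHom.range_eq_top.2 axisPerm_surjective, card_top, Nat.card_perm,
    Nat.card_fin]
  rfl

lemma coord_conjNormal (a : Fin 3 → IntAffine) (i : Fin 3) (g : hantzscheWendt) :
    coord i (MulAut.conjNormal a g) = a i * coord i g * (a i)⁻¹ := rfl

lemma mem_ker_axisPerm {f : MulAut hantzscheWendt} :
    f ∈ axisPerm.ker ↔ ∀ i g, axisSign i (f g) = axisSign i g := axisPerm_eq_iff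

lemma map_screw_mul_self {f : MulAut hantzscheWendt} (hf : f ∈ axisPerm.ker) (i : Fin 3) :
    f (screw i * screw i) = (screw i * screw i) ^ (coord i (f (screw i))).trans := by
  rw [map_mul, mul_self_eq_zpow fun j => mem_ker_axisPerm.1 hf j _]

lemma isUnit_trans_map_screw {f : MulAut hantzscheWendt} (hf : f ∈ axisPerm.ker) (i : Fin 3) :
    IsUnit (coord i (f (screw i))).trans := by
  have zpow_eq : (screw i * screw i) ^ ((coord i (f (screw i))).trans *
      (coord i (f⁻¹ (screw i))).trans) = screw i * screw i := by
    rw [mul_comm, zpow_mul, ← map_screw_mul_self (inv_mem hf), ← map_zpow,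
      ← map_screw_mul_self hf, MulAut.inv_apply_self]
  have trans_eq := congrArg (fun g => (coord i g).trans) zpow_eq
  rw [map_zpow, map_mul, coord_screw_self, trans_zpow rfl] at trans_eq
  exact .of_mul_eq_one _ (mul_right_cancel₀ two_ne_zero (trans_eq.trans (one_mul 2).symm))

lemma conjNormal_mem_ker_axisPerm (a : Fin 3 → IntAffine) :
    MulAut.conjNormal a ∈ axisPerm.ker :=
  mem_ker_axisPerm.2 fun i g => by
    simp only [axisSign, MonoidHom.comp_apply, coord_conjNormal, map_mul, map_inv,
      mul_inv_cancel_comm]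

lemma exists_eq_conjNormal {f : MulAut hantzscheWendt} (hf : f ∈ axisPerm.ker) :
    ∃ a : Fin 3 → IntAffine, MulAut.conjNormal a = f := by
  have sign_map (i : Fin 3) (g : hantzscheWendt) : (coord i (f g)).sign = (coord i g).sign :=
    mem_ker_axisPerm.1 hf i g
  have even_trans (i : Fin 3) : Even (coord i (f (screw (i + 1)))).trans := by
    rw [← Int.negOnePow_eq_one_iff, ← axisSign_add_one, mem_ker_axisPerm.1 hf, axisSign_screw,
      if_pos rfl]
  choose c hc using fun i => even_iff_exists_two_mul.1 (even_trans i)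
  choose δ hδ using isUnit_trans_map_screw hf
  let a : Fin 3 → IntAffine := fun i => ⟨c i, δ i⟩
  have coord_comp_eq (i : Fin 3) : (coord i).comp (MulAut.conjNormal a : MulAut _).toMonoidHom =
      (coord i).comp f.toMonoidHom := by
    refine hom_ext i ?_ ?_
    · change a i * coord i (screw i) * (a i)⁻¹ = coord i (f (screw i))
      rw [coord_screw_self, conj_translation]
      ext <;> simp [a, hδ, sign_map, coord_screw_self]
    · change a i * coord i (screw (i + 1)) * (a i)⁻¹ = coord i (f (screw (i + 1)))
      rw [coord_screw_add_one, conj_reflection]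
      ext <;> simp [a, hc, sign_map, coord_screw_add_one]
  exact ⟨a, MulEquiv.ext fun g => ext_coord fun i => DFunLike.congr_fun (coord_comp_eq i) g⟩

lemma range_conjNormal_eq_ker_axisPerm :
    (MulAut.conjNormal : (Fin 3 → IntAffine) →* MulAut hantzscheWendt).range = axisPerm.ker := by
  ext f
  constructor
  · rintro ⟨a, rfl⟩
    exact conjNormal_mem_ker_axisPerm a
  · exact exists_eq_conjNormal

lemma conjNormal_injective :
    Function.Injective (MulAut.conjNormal : (Fin 3 → IntAffine) →* MulAut hantzscheWendt) := by
  refine (injective_iff_map_eq_one _).2 fun a ha => funext fun i => ?_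
  have commutes (g : hantzscheWendt) : a i * coord i g * (a i)⁻¹ = coord i g := by
    rw [← coord_conjNormal, ha, MulAut.one_apply]
  have sign_eq_one : (a i).sign = 1 := by
    have h := commutes (screw i)
    rw [coord_screw_self, conj_translation] at h
    simpa using h
  have trans_eq_zero : (a i).trans = 0 := by
    have h := commutes (screw (i + 1))
    rw [coord_screw_add_one, conj_reflection] at h
    simpa using h
  exact IntAffine.ext trans_eq_zero sign_eq_one

lemma index_range_conj :
    (MulAut.conj : hantzscheWendt →* MulAut hantzscheWendt).range.index = 96 := by
  have range_conj_le : (MulAut.conj : hantzscheWendt →* _).range ≤ axisPerm.ker := by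
    rw [range_conj_eq_map_conjNormal hantzscheWendt, ← range_conjNormal_eq_ker_axisPerm]
    exact map_le_range _ _
  rw [← relIndex_mul_index range_conj_le, index_ker_axisPerm,
    range_conj_eq_map_conjNormal hantzscheWendt, ← range_conjNormal_eq_ker_axisPerm,
    MonoidHom.range_eq_map, relIndex_map_map_of_injective _ _ conjNormal_injective,
    relIndex_top_right, index_eq]

/-- The embedding of the model in which `screw 0` and `screw 1` become `affx` and `affy`. The axis
of `screw 0` meets the second coordinate axis of the model in `1 / 2`, whence the shift by
`-1 / 4`. -/
noncomputable def toAff : (Fin 3 → IntAffine) →* Aff3 :=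
  latticeAction ![1 / 2, 1 / 2, -1 / 2] ![0, -1 / 4, 0]

lemma toAff_screw_zero : toAff (screw 0).1 = affx := by
  ext w i
  rw [toAff, latticeAction_apply]
  fin_cases i <;> simp [screw, affx, diagLin]
  norm_num

lemma toAff_screw_one : toAff (screw 1).1 = affy := by
  ext w i
  rw [toAff, latticeAction_apply]
  fin_cases i <;> simp [screw, affy, diagLin]

lemma toAff_injective : Function.Injective toAff :=
  latticeAction_injective (by simp [Fin.forall_fin_succ]) _

lemma map_toAff : hantzscheWendt.map toAff = G6 := by
  rw [← range_subtype hantzscheWendt, MonoidHom.range_eq_map, ← closure_pair_screw 0,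
    MonoidHom.map_closure, MonoidHom.map_closure, Set.image_pair, Set.image_pair]
  exact congrArg₂ (Subgroup.closure {·, ·}) toAff_screw_zero toAff_screw_one

/-- The isomorphism from the integral model to `G6`. -/
noncomputable def equivG6 : hantzscheWendt ≃* G6 :=
  (hantzscheWendt.equivMapOfInjective toAff toAff_injective).trans
    (MulEquiv.subgroupCongr map_toAff)

end hantzscheWendt

/-- The outer automorphism group `Out(G₆) = Aut(G₆)/Inn(G₆)` of the
Hantzsche–Wendt group is a (finite) group of order 96.  (The subgroup of inner
automorphisms is the range of the conjugation homomorphism `MulAut.conj`; it is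
normal, so the quotient is a group, and it has 96 elements.) -/
theorem statement7 :
    ((MulAut.conj : G6 →* MulAut G6).range).Normal ∧
    Nat.card (MulAut G6 ⧸ (MulAut.conj : G6 →* MulAut G6).range) = 96 := by
  refine ⟨normal_range_conj G6, ?_⟩
  change (MulAut.conj : G6 →* MulAut G6).range.index = 96
  rw [← map_congr_range_conj hantzscheWendt.equivG6, index_map_equiv,
    hantzscheWendt.index_range_conj]
end

section
/- An automorphism φ of G₆ is meridianal — that is, the normal closure in G₆ of the set {g⁻¹φ(g) : g ∈ G₆} is all of G₆ — if and only if the induced automorphism of the quotient G₆/T ≅ (ℤ/2ℤ)² has order 3. -/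
/-!
Write `N` for the normal closure of the elements `g⁻¹ φ(g)` and `ψ` for the automorphism of the
Klein four-group `G₆ / T` induced by `φ`. An automorphism of a Klein four-group has order 3 exactly
when it fixes no nontrivial element.

If `N = G₆`, then the endomorphism `u ↦ u / ψ(u)` of `G₆ / T` is surjective, hence injective, so `ψ`
is fixed-point-free. Conversely, if `ψ` is fixed-point-free then every element of `G₆ / T` has the
form `u / ψ(u)`, so `N T = G₆`. Now `T` is generated by the squares in `G₆`, and `g⁴ ∈ [G₆, G₆]` for
all `g`, because conjugation by `y` inverts `x²` and conjugation by `x` inverts `y²`. Hence in the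
abelianization of `G₆ / N` every element is a square, thus a fourth power, thus trivial, and
`N = G₆` because `G₆` is solvable.
-/

/-- The kernel of the projection from `G` to its largest quotient on which `φ` induces the identity.
An automorphism `φ` is meridianal when this is all of `G`. It is defined for bare functions, as is
`MonoidHom.FixedPointFree`, so that it applies to both homomorphisms and automorphisms. -/
def coinvariantsKer {G : Type*} [Group G] (φ : G → G) : Subgroup G :=
  Subgroup.normalClosure {w | ∃ g, w = g⁻¹ * φ g}

/-- The verbal subgroup of `G` generated by the `n`-th powers. -/
def powSubgroup (G : Type*) [Group G] (n : ℕ) : Subgroup G :=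
  Subgroup.closure (Set.range fun g : G => g ^ n)

section Coinvariants

variable {G : Type*} [Group G]

instance coinvariantsKer_normal (φ : G → G) : (coinvariantsKer φ).Normal :=
  Subgroup.normalClosure_normal

lemma commutatorMap_mem_coinvariantsKer (φ : G → G) (g : G) :
    MonoidHom.commutatorMap φ g ∈ coinvariantsKer φ := by
  have hg : g⁻¹ * φ g ∈ coinvariantsKer φ := Subgroup.subset_normalClosure ⟨g, rfl⟩
  simpa [div_eq_mul_inv, mul_assoc] using (coinvariantsKer_normal φ).conj_mem _ (inv_mem hg) g

variable {Q F : Type*} [Group Q] [Finite Q] [FunLike F Q Q] [MonoidHomClass F Q Q]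
  {φ : G → G} {ψ : F} {q : G →* Q}

lemma coinvariantsKer_sup_ker_eq_top (hq : Function.Surjective q) (hψ : ∀ g, ψ (q g) = q (φ g))
    (hfree : MonoidHom.FixedPointFree ψ) : coinvariantsKer φ ⊔ q.ker = ⊤ := by
  refine eq_top_iff.2 fun g _ => ?_
  obtain ⟨u, hu⟩ := hfree.commutatorMap_surjective (q g)
  obtain ⟨h, rfl⟩ := hq u
  have hker : (MonoidHom.commutatorMap φ h)⁻¹ * g ∈ q.ker := by
    rw [MonoidHom.mem_ker, map_mul, ← hu]
    simp [hψ]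
  have hmem := Subgroup.mul_mem_sup (commutatorMap_mem_coinvariantsKer φ h) hker
  rwa [mul_inv_cancel_left] at hmem

open scoped IsMulCommutative in
lemma fixedPointFree_of_coinvariantsKer_eq_top [IsMulCommutative Q] (hq : Function.Surjective q)
    (hψ : ∀ g, ψ (q g) = q (φ g)) (htop : coinvariantsKer φ = ⊤) :
    MonoidHom.FixedPointFree ψ := by
  let δ : Q →* Q := MonoidHom.id Q / (ψ : Q →* Q)
  have hle : coinvariantsKer φ ≤ δ.range.comap q := by
    refine Subgroup.normalClosure_le_normal ?_
    rintro _ ⟨g, rfl⟩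
    exact ⟨(q g)⁻¹, by simp [δ, hψ]⟩
  have hsurj : Function.Surjective δ := fun u => by
    obtain ⟨g, rfl⟩ := hq u
    exact hle (htop ▸ Subgroup.mem_top g)
  exact fun u hu => (injective_iff_map_eq_one δ).1 (Finite.injective_iff_surjective.2 hsurj) u
    (by simp [δ, hu])

end Coinvariants

section PowSubgroup

variable {G : Type*} [Group G]

lemma pow_mem_powSubgroup (n : ℕ) (g : G) : g ^ n ∈ powSubgroup G n :=
  Subgroup.subset_closure ⟨g, rfl⟩

lemma powSubgroup_le_iff {n : ℕ} {H : Subgroup G} : powSubgroup G n ≤ H ↔ ∀ g : G, g ^ n ∈ H := by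
  simp [powSubgroup, Subgroup.closure_le, Set.range_subset_iff]

instance powSubgroup_characteristic (n : ℕ) : (powSubgroup G n).Characteristic :=
  Subgroup.characteristic_iff_le_comap.2 fun e => powSubgroup_le_iff.2 fun g => by
    simpa using pow_mem_powSubgroup n (e g)

lemma surjective_pow_of_sup_powSubgroup_eq_top {B : Type*} [CommGroup B] {f : G →* B}
    (hf : Function.Surjective f) {n : ℕ} (hsup : f.ker ⊔ powSubgroup G n = ⊤) :
    Function.Surjective fun b : B => b ^ n := by
  have hrange : (powMonoidHom n : B →* B).range.comap f = ⊤ := by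
    refine top_le_iff.1 (hsup ▸ sup_le (MonoidHom.ker_le_comap _ _) ?_)
    exact powSubgroup_le_iff.2 fun g => ⟨f g, by simp⟩
  intro b
  obtain ⟨g, rfl⟩ := hf b
  exact Subgroup.mem_comap.1 (hrange ▸ Subgroup.mem_top g)

lemma eq_top_of_sup_powSubgroup_eq_top [Group.IsSolvable G] {n k : ℕ}
    (hpow : ∀ g : G, g ^ n ^ k ∈ commutator G) {N : Subgroup G} [N.Normal]
    (hsup : N ⊔ powSubgroup G n = ⊤) : N = ⊤ := by
  by_contra hN
  have : Nontrivial (G ⧸ N) := QuotientGroup.nontrivial_iff.2 hN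
  let f : G →* Abelianization (G ⧸ N) := Abelianization.of.comp (QuotientGroup.mk' N)
  have hf : Function.Surjective f :=
    (QuotientGroup.mk'_surjective _).comp (QuotientGroup.mk'_surjective N)
  have hNf : N ≤ f.ker := fun g hg => by simp [f, (QuotientGroup.eq_one_iff g).2 hg]
  have hsurj : Function.Surjective fun b : Abelianization (G ⧸ N) => b ^ n ^ k := by
    rw [← pow_iterate]
    exact (surjective_pow_of_sup_powSubgroup_eq_top hf
      (top_le_iff.1 (hsup ▸ sup_le_sup_right hNf _))).iterate k
  have hone (b : Abelianization (G ⧸ N)) : b = 1 := by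
    obtain ⟨c, rfl⟩ := hsurj b
    obtain ⟨g, rfl⟩ := hf c
    simpa using Abelianization.commutator_subset_ker f (hpow g)
  refine (Group.IsSolvable.commutator_lt_top_of_nontrivial (G ⧸ N)).ne (eq_top_iff.2 fun a _ => ?_)
  rw [← Abelianization.ker_of]
  exact hone _

end PowSubgroup

section KleinFour

open IsKleinFour

variable {Q : Type*} [Group Q] [IsKleinFour Q]

lemma eq_one_of_pow_three_eq_one_of_map_eq {ψ : MulAut Q} (hψ : ψ ^ 3 = 1) {u : Q} (hu : u ≠ 1)
    (hfix : ψ u = u) : ψ = 1 := by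
  ext v
  by_contra hv
  rw [MulAut.one_apply] at hv
  have hv1 : v ≠ 1 := fun h => hv (by simp [h])
  have hvu : v ≠ u := fun h => hv (by simp [h, hfix])
  have hψv : ψ v = u * v :=
    eq_mul_of_ne_all hu hv1 hvu.symm (by simpa using hv1)
      (fun h => hvu (ψ.injective (h.trans hfix.symm))) hv
  have hψψv : ψ (ψ v) = v := by rw [hψv, map_mul, hfix, hψv, ← mul_assoc, mul_self, one_mul]
  have hψψψv : ψ (ψ (ψ v)) = v := congr($hψ v)
  exact hv (by rwa [hψψv] at hψψψv)

lemma pow_three_eq_one_of_fixedPointFree {ψ : MulAut Q} (hψ : MonoidHom.FixedPointFree ψ) :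
    ψ ^ 3 = 1 := by
  have := IsKleinFour.isMulCommutative (G := Q)
  ext u
  change ψ (ψ (ψ u)) = u
  rcases eq_or_ne u 1 with rfl | hu
  · simp
  have hψu : ψ u ≠ u := fun h => hu (hψ u h)
  have hψψu : ψ (ψ u) ≠ u := fun h => by
    have hone : u * ψ u = 1 := hψ _ (by rw [map_mul, h, mul_comm'])
    exact hψu ((eq_inv_of_mul_eq_one_right hone).trans (inv_eq_self u))
  have hmul : ψ (ψ u) = u * ψ u :=
    eq_mul_of_ne_all hu (by simpa using hu) hψu.symm (by simpa using hu) hψψu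
      (fun h => hψu (ψ.injective h))
  rw [hmul, map_mul, hmul, mul_comm' u, ← mul_assoc, mul_self, one_mul]

lemma orderOf_eq_three_iff_fixedPointFree (ψ : MulAut Q) :
    orderOf ψ = 3 ↔ MonoidHom.FixedPointFree ψ := by
  have : Nontrivial Q := Finite.one_lt_card_iff_nontrivial.1 (by simp)
  rw [orderOf_eq_prime_iff]
  constructor
  · rintro ⟨hψ, hne⟩ u hfix
    by_contra hu
    exact hne (eq_one_of_pow_three_eq_one_of_map_eq hψ hu hfix)
  · refine fun hψ => ⟨pow_three_eq_one_of_fixedPointFree hψ, ?_⟩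
    rintro rfl
    obtain ⟨u, hu⟩ := exists_ne (1 : Q)
    exact hu (hψ u rfl)

end KleinFour

namespace G6

/-- The holonomy representation of `G₆`, sending `(v, A)` to `A`. -/
noncomputable def linearPart : G6 →* V3 ≃ₗ[ℝ] V3 :=
  AffineEquiv.linearHom.comp G6.subtype

lemma ker_linearPart : linearPart.ker = TT.subgroupOf G6 := by
  ext g
  simp [linearPart, TT, Subgroup.mem_subgroupOf, MonoidHom.mem_ker]

lemma affx_apply (v : V3) : affx v = ![v 0 + 1 / 2, -v 1, -v 2] := by
  ext i
  fin_cases i <;> simp [affx, diagLin, add_comm]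

lemma affy_apply (v : V3) : affy v = ![-v 0, v 1 + 1 / 2, -v 2 - 1 / 2] := by
  ext i
  fin_cases i <;> simp [affy, diagLin, add_comm, sub_eq_add_neg, neg_div]

lemma linearPart_xg_apply (v : V3) : linearPart xg v = ![v 0, -v 1, -v 2] := by
  change diagLin _ sq_one_X v = _
  ext i
  fin_cases i <;> simp [diagLin]

lemma linearPart_yg_apply (v : V3) : linearPart yg v = ![-v 0, v 1, -v 2] := by
  change diagLin _ sq_one_Y v = _
  ext i
  fin_cases i <;> simp [diagLin]

lemma linearPart_xg_sq : linearPart xg ^ 2 = 1 := by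
  ext1 v
  rw [sq, LinearEquiv.mul_apply, linearPart_xg_apply, linearPart_xg_apply]
  ext i
  fin_cases i <;> simp

lemma linearPart_yg_sq : linearPart yg ^ 2 = 1 := by
  ext1 v
  rw [sq, LinearEquiv.mul_apply, linearPart_yg_apply, linearPart_yg_apply]
  ext i
  fin_cases i <;> simp

lemma commute_linearPart : Commute (linearPart xg) (linearPart yg) := by
  refine LinearEquiv.ext fun v => ?_
  simp only [LinearEquiv.mul_apply, linearPart_xg_apply, linearPart_yg_apply]
  ext i
  fin_cases i <;> simp

lemma closure_xg_yg : Subgroup.closure {xg, yg} = (⊤ : Subgroup G6) := by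
  have hpre : ({xg, yg} : Set G6) = (↑) ⁻¹' {affx, affy} := by
    ext g
    simp [xg, yg, Subtype.ext_iff]
  rw [hpre]
  exact Subgroup.closure_closure_coe_preimage

/-- Representatives of the cosets of the translation subgroup in `G₆`. -/
noncomputable def cosetRep : Fin 4 → G6 := ![1, xg, yg, zg]

lemma linearPart_cosetRep_injective : Function.Injective (linearPart ∘ cosetRep) := by
  have happly (i : Fin 4) : linearPart (cosetRep i) 1 =
      ![![1, 1, 1], ![1, -1, -1], ![-1, 1, -1], ![-1, -1, 1]] i := by
    ext k
    fin_cases i <;> fin_cases k <;>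
      simp [cosetRep, zg, linearPart_xg_apply, linearPart_yg_apply]
  intro i j hij
  have hsigns : linearPart (cosetRep i) 1 = linearPart (cosetRep j) 1 := congr($hij 1)
  rw [happly, happly] at hsigns
  revert hsigns
  fin_cases i <;> fin_cases j <;> norm_num [Matrix.vecCons_inj]

section ImageOfExponentTwo

variable {H : Type*} [Group H] {f : G6 →* H}

lemma map_xg_mul_map_cosetRep (hx : f xg ^ 2 = 1) (i : Fin 4) :
    f xg * f (cosetRep i) = f (cosetRep (![1, 0, 3, 2] i)) := by
  rw [sq] at hx
  fin_cases i <;> simp [cosetRep, zg, hx, ← mul_assoc]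

lemma map_yg_mul_map_cosetRep (hy : f yg ^ 2 = 1) (hxy : Commute (f xg) (f yg)) (i : Fin 4) :
    f yg * f (cosetRep i) = f (cosetRep (![2, 3, 0, 1] i)) := by
  rw [sq] at hy
  fin_cases i <;> simp [cosetRep, zg, hy, hxy.eq, ← mul_assoc]

lemma exists_map_eq_map_cosetRep (hx : f xg ^ 2 = 1) (hy : f yg ^ 2 = 1)
    (hxy : Commute (f xg) (f yg)) (g : G6) : ∃ i, f g = f (cosetRep i) := by
  have hmul : ∀ s ∈ ({xg, yg} : Set G6), ∀ i, ∃ j, f s * f (cosetRep i) = f (cosetRep j) := by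
    rintro s (rfl | rfl) i
    · exact ⟨_, map_xg_mul_map_cosetRep hx i⟩
    · exact ⟨_, map_yg_mul_map_cosetRep hy hxy i⟩
  have hinv : ∀ s ∈ ({xg, yg} : Set G6), f s⁻¹ = f s := by
    rintro s (rfl | rfl) <;> rw [map_inv, inv_eq_iff_mul_eq_one, ← sq] <;> assumption
  have hg : g ∈ Subgroup.closure {xg, yg} := closure_xg_yg ▸ Subgroup.mem_top g
  induction hg using Subgroup.closure_induction_left with
  | one => exact ⟨0, rfl⟩
  | mul_left s hs g _ ih =>
    obtain ⟨i, hi⟩ := ih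
    rw [map_mul, hi]
    exact hmul s hs i
  | inv_mul_cancel s hs g _ ih =>
    obtain ⟨i, hi⟩ := ih
    rw [map_mul, hinv s hs, hi]
    exact hmul s hs i

lemma exists_map_eq_map_cosetRep_of_forall_sq (hf : ∀ g, f g ^ 2 = 1) (g : G6) :
    ∃ i, f g = f (cosetRep i) := by
  refine exists_map_eq_map_cosetRep (hf xg) (hf yg) ?_ g
  have hz : f xg * f yg * (f xg * f yg) = 1 := by simpa [sq] using hf (xg * yg)
  have hinv (g : G6) : (f g)⁻¹ = f g := inv_eq_of_mul_eq_one_left (by rw [← sq, hf])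
  rw [Commute, SemiconjBy, ← inv_eq_of_mul_eq_one_left hz, mul_inv_rev, hinv, hinv]

end ImageOfExponentTwo

lemma linearPart_sq (g : G6) : linearPart g ^ 2 = 1 := by
  obtain ⟨i, hi⟩ :=
    exists_map_eq_map_cosetRep linearPart_xg_sq linearPart_yg_sq commute_linearPart g
  rw [hi]
  fin_cases i <;>
    simp [cosetRep, zg, linearPart_xg_sq, linearPart_yg_sq, commute_linearPart.mul_pow]

lemma powSubgroup_two : powSubgroup G6 2 = TT.subgroupOf G6 := by
  have hle : powSubgroup G6 2 ≤ linearPart.ker :=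
    powSubgroup_le_iff.2 fun g => by rw [MonoidHom.mem_ker, map_pow, linearPart_sq]
  rw [← ker_linearPart]
  refine le_antisymm hle fun g hg => ?_
  let π := QuotientGroup.mk' (powSubgroup G6 2)
  obtain ⟨i, hi⟩ := exists_map_eq_map_cosetRep_of_forall_sq (f := π)
    (fun g => (QuotientGroup.eq_one_iff _).2 (pow_mem_powSubgroup 2 g)) g
  have hlin : linearPart g = linearPart (cosetRep i) :=
    (MonoidHom.eq_iff _).2 (hle (QuotientGroup.eq.1 hi.symm))
  have hi0 : i = 0 := linearPart_cosetRep_injective <| by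
    simpa [cosetRep] using hlin.symm.trans hg
  exact (QuotientGroup.eq_one_iff g).1 (by simpa [hi0, cosetRep, π] using hi)

lemma isKleinFour_of_ker_eq {Q : Type*} [Group Q] {q : G6 →* Q} (hq : Function.Surjective q)
    (hker : q.ker = TT.subgroupOf G6) : IsKleinFour Q := by
  have hsq (g : G6) : q g ^ 2 = 1 := by
    rw [← map_pow, ← MonoidHom.mem_ker, hker, ← powSubgroup_two]
    exact pow_mem_powSubgroup 2 g
  have hbij : Function.Bijective (q ∘ cosetRep) := by
    constructor
    · intro i j hij
      refine linearPart_cosetRep_injective ((MonoidHom.eq_iff _).2 ?_)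
      rw [ker_linearPart, ← hker]
      exact (MonoidHom.eq_iff _).1 hij
    · intro u
      obtain ⟨g, rfl⟩ := hq u
      obtain ⟨i, hi⟩ := exists_map_eq_map_cosetRep_of_forall_sq hsq g
      exact ⟨i, hi.symm⟩
  have hcard : Nat.card Q = 4 := by rw [← Nat.card_eq_of_bijective _ hbij, Nat.card_fin]
  have : Finite Q := Nat.finite_of_card_ne_zero (by simp [hcard])
  have : Nontrivial Q := Finite.one_lt_card_iff_nontrivial.1 (by simp [hcard])
  refine ⟨hcard, (Monoid.exponent_eq_prime_iff Nat.prime_two).2 fun u hu => ?_⟩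
  obtain ⟨g, rfl⟩ := hq u
  exact orderOf_eq_prime (hsq g) hu

instance normal_translations : (TT.subgroupOf G6).Normal :=
  ker_linearPart ▸ linearPart.normal_ker

instance isKleinFour_quotient : IsKleinFour (G6 ⧸ TT.subgroupOf G6) :=
  isKleinFour_of_ker_eq (QuotientGroup.mk'_surjective _) (QuotientGroup.ker_mk' _)

lemma apply_eq_add_apply_zero {g : G6} (hg : g ∈ TT.subgroupOf G6) (v : V3) :
    (g : Aff3) v = v + (g : Aff3) 0 := by
  have hlin : (g : Aff3).linear = 1 := hg.2
  simpa [hlin] using (g : Aff3).map_vadd 0 v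

instance isMulCommutative_translations : IsMulCommutative (TT.subgroupOf G6) := by
  refine .of_comm fun ⟨s, hs⟩ ⟨t, ht⟩ => Subtype.ext (Subtype.ext (AffineEquiv.ext fun v => ?_))
  change (s : Aff3) ((t : Aff3) v) = (t : Aff3) ((s : Aff3) v)
  rw [apply_eq_add_apply_zero hs ((t : Aff3) v), apply_eq_add_apply_zero ht v,
    apply_eq_add_apply_zero ht ((s : Aff3) v), apply_eq_add_apply_zero hs v]
  exact add_right_comm v _ _

instance isSolvable : Group.IsSolvable G6 := by
  have := IsKleinFour.isMulCommutative (G := G6 ⧸ TT.subgroupOf G6)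
  exact (Group.isSolvable_iff_subgroup_quotient (TT.subgroupOf G6)).2
    ⟨Group.isSolvable_of_comm mul_comm', Group.isSolvable_of_comm mul_comm'⟩

lemma xg_sq_mul_yg_mul_xg_sq : xg ^ 2 * yg * xg ^ 2 = yg := by
  refine Subtype.ext (AffineEquiv.ext fun v => ?_)
  change affx (affx (affy (affx (affx v)))) = affy v
  simp only [affx_apply, affy_apply]
  ext i
  fin_cases i <;> simp; ring

lemma yg_sq_mul_xg_mul_yg_sq : yg ^ 2 * xg * yg ^ 2 = xg := by
  refine Subtype.ext (AffineEquiv.ext fun v => ?_)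
  change affy (affy (affx (affy (affy v)))) = affx v
  simp only [affx_apply, affy_apply]
  ext i
  fin_cases i <;> simp

lemma pow_four_mem_commutator (g : G6) : g ^ 4 ∈ commutator G6 := by
  have hpow {a b : Abelianization G6} (h : a ^ 2 * b * a ^ 2 = b) : a ^ 4 = 1 := by
    rwa [mul_right_comm, ← pow_add, mul_eq_right] at h
  have htriv : (powMonoidHom 4).comp (Abelianization.of (G := G6)) = 1 := by
    refine MonoidHom.eq_of_eqOn_dense closure_xg_yg ?_
    rintro _ (rfl | rfl)
    · exact hpow (b := .of yg) congr(Abelianization.of $xg_sq_mul_yg_mul_xg_sq)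
    · exact hpow (b := .of xg) congr(Abelianization.of $yg_sq_mul_xg_mul_yg_sq)
  rw [← Abelianization.ker_of, MonoidHom.mem_ker, map_pow]
  exact congr($htriv g)

/-- The automorphism of the holonomy group `G₆ / T` induced by an automorphism of `G₆`. It exists
because `T` is the verbal subgroup of `G₆` generated by the squares. -/
noncomputable def quotientAut (φ : MulAut G6) : MulAut (G6 ⧸ TT.subgroupOf G6) :=
  QuotientGroup.congr _ _ φ <| by
    rw [← powSubgroup_two]
    exact Subgroup.characteristic_iff_map_eq.1 inferInstance φ

end G6

/-- An automorphism `φ` of `G₆` is meridianal — the normal closure in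
`G₆` of `{g⁻¹φ(g) : g ∈ G₆}` is all of `G₆` — if and only if the automorphism it
induces on the quotient `G₆/T ≅ (ℤ/2ℤ)²` has order 3.  (The quotient is realized by
any surjective homomorphism `q : G₆ → Q` with kernel `T`, and the induced
automorphism is the `ψ` with `ψ ∘ q = q ∘ φ`.) -/
theorem statement9 :
    ∀ φ : MulAut G6,
      (Subgroup.normalClosure {w : G6 | ∃ g : G6, w = g⁻¹ * φ g} = ⊤) ↔
      (∀ (Q : Type) [Group Q] (q : G6 →* Q), Function.Surjective q →
        q.ker = TT.subgroupOf G6 →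
        ∀ ψ : MulAut Q, (∀ g : G6, ψ (q g) = q (φ g)) → orderOf ψ = 3) := by
  intro φ
  constructor
  · intro hφ Q _ q hq hker ψ hψ
    have : IsKleinFour Q := G6.isKleinFour_of_ker_eq hq hker
    have : IsMulCommutative Q := IsKleinFour.isMulCommutative
    have : Finite Q := IsKleinFour.instFinite
    exact (orderOf_eq_three_iff_fixedPointFree ψ).2
      (fixedPointFree_of_coinvariantsKer_eq_top hq hψ hφ)
  · intro horder
    have : Finite (G6 ⧸ TT.subgroupOf G6) := IsKleinFour.instFinite
    have hq := QuotientGroup.mk'_surjective (TT.subgroupOf G6)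
    have hψ (g : G6) : G6.quotientAut φ (QuotientGroup.mk' _ g) = QuotientGroup.mk' _ (φ g) := rfl
    have hfree := (orderOf_eq_three_iff_fixedPointFree _).1
      (horder _ _ hq (QuotientGroup.ker_mk' _) _ hψ)
    have hsup : coinvariantsKer φ ⊔ powSubgroup G6 2 = ⊤ := by
      simpa [G6.powSubgroup_two] using coinvariantsKer_sup_ker_eq_top hq hψ hfree
    exact eq_top_of_sup_powSubgroup_eq_top (k := 2) G6.pow_four_mem_commutator hsup
end

section
/- For every even integer e and η ∈ {1,−1}: the centre of Γ(e,η) is infinite cyclic, generated by the image of z^{3η} (equivalently, by the image of h); moreover, since Γ(e,η)/Γ(e,η)′ is finite, every group homomorphism from Γ(e,η) to its centre is trivial, and the natural homomorphism from Aut(Γ(e,η)) to Aut(Γ(e,η)/ζΓ(e,η)) is injective. -/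
/-! The group `Γ(e,η)` with presentation `⟨h, x, y, z | x³ = y³ = z^{3η} = h, xyz = hᵉ⟩`,
for an even integer `e` and `η = ±1`.  Generator `0` is `h`, generator `1` is `x`,
generator `2` is `y` and generator `3` is `z`. -/

def gamRels (e η : ℤ) : Set (FreeGroup (Fin 4)) :=
  { (FreeGroup.of 1) ^ 3 * (FreeGroup.of 0)⁻¹,
    (FreeGroup.of 2) ^ 3 * (FreeGroup.of 0)⁻¹,
    (FreeGroup.of 3) ^ (3 * η) * (FreeGroup.of 0)⁻¹,
    FreeGroup.of 1 * FreeGroup.of 2 * FreeGroup.of 3 * ((FreeGroup.of 0) ^ e)⁻¹ }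

/-- The group `Γ(e,η)`. -/
abbrev Gam (e η : ℤ) : Type := PresentedGroup (gamRels e η)

/-- The image of the generator `h` in `Γ(e,η)`. -/
def hG (e η : ℤ) : Gam e η := PresentedGroup.of 0
/-- The image of the generator `x` in `Γ(e,η)`. -/
def xG (e η : ℤ) : Gam e η := PresentedGroup.of 1
/-- The image of the generator `y` in `Γ(e,η)`. -/
def yG (e η : ℤ) : Gam e η := PresentedGroup.of 2
/-- The image of the generator `z` in `Γ(e,η)`. -/
def zG (e η : ℤ) : Gam e η := PresentedGroup.of 3

/-- `u = z⁻¹x`. -/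
def uG (e η : ℤ) : Gam e η := (zG e η)⁻¹ * xG e η
/-- `v = xz⁻¹`. -/
def vG (e η : ℤ) : Gam e η := xG e η * (zG e η)⁻¹

/-! The element `h` is central because it is a power of each of the generators `x` and `z`. The
quotient `Γ(e,η)/⟨h⟩` is the `(3,3,3)` triangle group; each of its elements is `uᵇvᶜxᵈ`, where `u`
and `v` act on the Eisenstein integers as translations and `x` as multiplication by `ω`. A central
element fixes the only fixed point of `x`, so it is `xᵈ`, and since it also commutes with the
translation `u`, `3` divides `d`; hence the centre is `⟨h⟩`. A lift of the plane action to a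
Heisenberg-type action on `ℤ[ω] × ℤ` sends `h` to a nonzero translation, so `h` has infinite order.

In the abelianization, cubing `xyz = hᵉ` gives `h ^ (3e - η - 2) = 1`, so the abelianization is
finite and has no nontrivial homomorphism to the torsion-free group `⟨h⟩`. Two automorphisms
agreeing modulo the centre differ by a homomorphism to the centre. -/

section Homomorphisms

open Subgroup

variable {G H : Type*} [Group G] [Group H]

theorem normal_zpowers_of_mem_center {g : G} (hg : g ∈ center G) : (zpowers g).Normal where
  conj_mem n hn k := by
    have hn' : n ∈ center G := zpowers_le.mpr hg hn
    rwa [mem_center_iff.mp hn' k, mul_inv_cancel_right]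

theorem isMulTorsionFree_zpowers {g : G} (hg : ¬IsOfFinOrder g) :
    IsMulTorsionFree (zpowers g) where
  pow_left_injective := by
    rintro n hn ⟨_, i, rfl⟩ ⟨_, j, rfl⟩ hij
    have hpow : (g ^ i) ^ n = (g ^ j) ^ n := congrArg Subtype.val hij
    simp only [← zpow_natCast, ← zpow_mul] at hpow
    have hmul : i * n = j * n := injective_zpow_iff_not_isOfFinOrder.mpr hg hpow
    rw [mul_right_cancel₀ (Int.natCast_ne_zero.mpr hn) hmul]

open scoped IsMulCommutative in
theorem monoidHom_eq_one_of_finite_abelianization [Finite (Abelianization G)]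
    [IsMulCommutative H] [IsMulTorsionFree H] (f : G →* H) : f = 1 := by
  ext g
  have hg : IsOfFinOrder (Abelianization.lift f (Abelianization.of g)) :=
    MonoidHom.isOfFinOrder _ (isOfFinOrder_of_finite _)
  rwa [Abelianization.lift_apply_of, isOfFinOrder_iff_eq_one] at hg

theorem finite_abelianization_of_closure_eq_top {s : Set G} (hfin : s.Finite)
    (hs : closure s = ⊤) (h : ∀ g ∈ s, IsOfFinOrder (Abelianization.of g)) :
    Finite (Abelianization G) := by
  have : Group.FG G := Group.fg_iff.mpr ⟨s, hs, hfin⟩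
  have : Group.FG (Abelianization G) :=
    Group.fg_of_surjective (f := Abelianization.of) QuotientGroup.mk_surjective
  refine CommGroup.finite_of_fg_isMulTorsion _ fun a ↦ ?_
  obtain ⟨g, rfl⟩ : ∃ g, Abelianization.of g = a := QuotientGroup.mk_surjective a
  have hle : closure s ≤ (CommGroup.torsion (Abelianization G)).comap Abelianization.of :=
    (closure_le _).mpr h
  exact hle (hs ▸ mem_top g)

/-- The homomorphism `g ↦ (f₁ g)⁻¹ f₂ g` comparing two homomorphisms that agree modulo the
centre of their target. -/
def centralDifference (f₁ f₂ : G →* H) (h : ∀ g, (f₁ g)⁻¹ * f₂ g ∈ center H) :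
    G →* center H where
  toFun g := ⟨(f₁ g)⁻¹ * f₂ g, h g⟩
  map_one' := by ext; simp
  map_mul' a b := by
    ext
    calc (f₁ (a * b))⁻¹ * f₂ (a * b)
        = (f₁ b)⁻¹ * ((f₁ a)⁻¹ * f₂ a) * f₂ b := by simp only [map_mul]; group
      _ = (f₁ a)⁻¹ * f₂ a * ((f₁ b)⁻¹ * f₂ b) := by
        rw [mem_center_iff.mp (h a), mul_assoc]

theorem monoidHom_eq_of_inv_mul_mem_center (hcenter : ∀ ψ : G →* center H, ψ = 1)
    {f₁ f₂ : G →* H} (h : ∀ g, (f₁ g)⁻¹ * f₂ g ∈ center H) : f₁ = f₂ := by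
  ext g
  have hg := DFunLike.congr_fun (hcenter (centralDifference f₁ f₂ h)) g
  exact inv_mul_eq_one.mp (congrArg Subtype.val hg)

end Homomorphisms

section TriangleRelations

open Subgroup

variable {G : Type*} [Group G] {x z : G}

theorem mul_self_eq_inv_of_pow_three_eq_one (hx : x ^ 3 = 1) : x * x = x⁻¹ := by
  rw [eq_inv_iff_mul_eq_one, ← hx, pow_succ, pow_two]

theorem mul_mul_eq_of_mul_pow_three_eq_one (hzx : (z * x) ^ 3 = 1) :
    x * z * x = z⁻¹ * x⁻¹ * z⁻¹ := by
  calc x * z * x = z⁻¹ * (z * x) ^ 3 * (z * x)⁻¹ := by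
        simp only [pow_succ, pow_zero]; group
    _ = z⁻¹ * x⁻¹ * z⁻¹ := by rw [hzx]; group

theorem commute_inv_mul_mul_inv (hx : x ^ 3 = 1) (hz : z ^ 3 = 1) (hzx : (z * x) ^ 3 = 1) :
    Commute (z⁻¹ * x) (x * z⁻¹) := by
  calc z⁻¹ * x * (x * z⁻¹) = z⁻¹ * (x * x) * z⁻¹ := by simp only [mul_assoc]
    _ = x * z * x := by
        rw [mul_self_eq_inv_of_pow_three_eq_one hx, mul_mul_eq_of_mul_pow_three_eq_one hzx]
    _ = x * (z * z)⁻¹ * x := by rw [mul_self_eq_inv_of_pow_three_eq_one hz, inv_inv]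
    _ = x * z⁻¹ * (z⁻¹ * x) := by simp only [mul_inv_rev, mul_assoc]

theorem semiconjBy_mul_inv_inv_mul_inv (hx : x ^ 3 = 1) (hz : z ^ 3 = 1) :
    SemiconjBy x (x * z⁻¹) ((z⁻¹ * x)⁻¹ * (x * z⁻¹)⁻¹) := by
  calc x * (x * z⁻¹) = x⁻¹ * (z * z) := by
        rw [← mul_assoc, mul_self_eq_inv_of_pow_three_eq_one hx,
          mul_self_eq_inv_of_pow_three_eq_one hz]
    _ = (z⁻¹ * x)⁻¹ * (x * z⁻¹)⁻¹ * x := by group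

theorem mul_zpow_mul_zpow_mul_zpow {u v : G} (huv : Commute u v) (hu : SemiconjBy x u v)
    (hv : SemiconjBy x v (u⁻¹ * v⁻¹)) (b c d : ℤ) :
    x * (u ^ b * v ^ c * x ^ d) = u ^ (-c) * v ^ (b - c) * x ^ (d + 1) := by
  calc x * (u ^ b * v ^ c * x ^ d) = v ^ b * (u⁻¹ * v⁻¹) ^ c * x * x ^ d := by
        rw [← mul_assoc, ((hu.zpow_right b).mul_right (hv.zpow_right c)).eq]
    _ = v ^ b * u ^ (-c) * v ^ (-c) * (x * x ^ d) := by
        rw [huv.inv_inv.mul_zpow, inv_zpow', inv_zpow', mul_assoc _ x, ← mul_assoc (v ^ b)]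
    _ = u ^ (-c) * (v ^ b * v ^ (-c)) * (x * x ^ d) := by
        rw [(huv.symm.zpow_zpow b (-c)).eq, mul_assoc (u ^ (-c))]
    _ = u ^ (-c) * v ^ (b - c) * x ^ (d + 1) := by
        rw [← zpow_add, ← sub_eq_add_neg, ← zpow_one_add, add_comm 1 d]

theorem exists_eq_zpow_mul_zpow_mul_zpow (hx : x ^ 3 = 1) (hz : z ^ 3 = 1)
    (hzx : (z * x) ^ 3 = 1) {g : G} (hg : g ∈ closure {x, z}) :
    ∃ b c d : ℤ, g = (z⁻¹ * x) ^ b * (x * z⁻¹) ^ c * x ^ d := by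
  let S : Set G := {g | ∃ b c d : ℤ, g = (z⁻¹ * x) ^ b * (x * z⁻¹) ^ c * x ^ d}
  have mul_x {g} : g ∈ S → x * g ∈ S := by
    rintro ⟨b, c, d, rfl⟩
    exact ⟨_, _, _, mul_zpow_mul_zpow_mul_zpow (commute_inv_mul_mul_inv hx hz hzx)
      (mul_assoc x z⁻¹ x).symm (semiconjBy_mul_inv_inv_mul_inv hx hz) b c d⟩
  have mul_u (k : ℤ) {g} : g ∈ S → (z⁻¹ * x) ^ k * g ∈ S := by
    rintro ⟨b, c, d, rfl⟩
    exact ⟨k + b, c, d, by simp only [zpow_add, mul_assoc]⟩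
  have mul_x_inv {g} (hg : g ∈ S) : x⁻¹ * g ∈ S := by
    rw [← mul_self_eq_inv_of_pow_three_eq_one hx, mul_assoc]
    exact mul_x (mul_x hg)
  have mul_z {g} (hg : g ∈ S) : z * g ∈ S := by
    simpa [mul_assoc] using mul_x (mul_u (-1) hg)
  have mul_z_inv {g} (hg : g ∈ S) : z⁻¹ * g ∈ S := by
    simpa [mul_assoc] using mul_u 1 (mul_x_inv hg)
  change g ∈ S
  induction hg using closure_induction_left with
  | one => exact ⟨0, 0, 0, by simp⟩
  | mul_left a ha g _ ih =>
    rcases ha with rfl | rfl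
    exacts [mul_x ih, mul_z ih]
  | inv_mul_cancel a ha g _ ih =>
    rcases ha with rfl | rfl
    exacts [mul_x_inv ih, mul_z_inv ih]

end TriangleRelations

section PlaneAction

/-- The map `w ↦ ωw + c` of order three on the Eisenstein integers `ℤ[ω]`, where `ω² + ω + 1 = 0`
and `(a, b)` stands for `a + bω`. -/
def eisensteinRotation (c : ℤ × ℤ) : Equiv.Perm (ℤ × ℤ) where
  toFun p := (c.1 - p.2, c.2 + p.1 - p.2)
  invFun p := (p.2 - c.2 - (p.1 - c.1), c.1 - p.1)
  left_inv p := by ext <;> simp only <;> ring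
  right_inv p := by ext <;> simp only <;> ring

theorem eisensteinRotation_apply (c p : ℤ × ℤ) :
    eisensteinRotation c p = (c.1 - p.2, c.2 + p.1 - p.2) := rfl

theorem eisensteinRotation_symm_apply (c p : ℤ × ℤ) :
    (eisensteinRotation c).symm p = (p.2 - c.2 - (p.1 - c.1), c.1 - p.1) := rfl

theorem eisensteinRotation_pow_three (c : ℤ × ℤ) : eisensteinRotation c ^ 3 = 1 := by
  ext p <;>
    simp only [pow_succ, pow_zero, one_mul, Equiv.Perm.mul_apply, Equiv.Perm.one_apply,
      eisensteinRotation_apply] <;>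
    ring

theorem eisensteinRotation_inv_mul (c d : ℤ × ℤ) :
    (eisensteinRotation c)⁻¹ * eisensteinRotation d =
      Equiv.addRight (d.2 - c.2 - (d.1 - c.1), c.1 - d.1) := by
  ext p <;>
    simp only [Equiv.Perm.mul_apply, Equiv.Perm.inv_def, eisensteinRotation_apply,
      eisensteinRotation_symm_apply, Equiv.coe_addRight, Prod.fst_add, Prod.snd_add] <;>
    ring

theorem eisensteinRotation_mul_inv (c d : ℤ × ℤ) :
    eisensteinRotation c * (eisensteinRotation d)⁻¹ = Equiv.addRight (c - d) := by
  ext p <;>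
    simp only [Equiv.Perm.mul_apply, Equiv.Perm.inv_def, eisensteinRotation_apply,
      eisensteinRotation_symm_apply, Equiv.coe_addRight, Prod.fst_add, Prod.snd_add, Prod.fst_sub,
      Prod.snd_sub] <;>
    ring

theorem eq_zero_of_eisensteinRotation_zero_apply_eq_self {p : ℤ × ℤ}
    (hp : eisensteinRotation 0 p = p) : p = 0 := by
  simp only [eisensteinRotation_apply, Prod.ext_iff, Prod.fst_zero, Prod.snd_zero] at hp ⊢
  omega

theorem eisensteinRotation_zero_zpow_apply_zero (d : ℤ) : (eisensteinRotation 0 ^ d) 0 = 0 :=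
  Equiv.Perm.zpow_apply_eq_self_of_apply_eq_self rfl d

theorem three_dvd_of_eisensteinRotation_zero_zpow_apply_eq_self {d : ℤ} {p : ℤ × ℤ} (hp₀ : p ≠ 0)
    (hp : (eisensteinRotation 0 ^ d) p = p) : 3 ∣ d := by
  by_contra hd
  have hcop : IsCoprime d 3 := (Int.prime_three.coprime_iff_not_dvd.mpr hd).symm
  obtain ⟨s, t, hst⟩ := hcop
  have hcube : eisensteinRotation 0 ^ (t * 3) = 1 := by
    rw [mul_comm, zpow_mul, zpow_ofNat, eisensteinRotation_pow_three, one_zpow]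
  have hroot : eisensteinRotation 0 = (eisensteinRotation 0 ^ d) ^ s := by
    rw [← zpow_mul, mul_comm, ← mul_one (_ ^ (s * d)), ← hcube, ← zpow_add, hst, zpow_one]
  refine hp₀ (eq_zero_of_eisensteinRotation_zero_apply_eq_self ?_)
  rw [hroot]
  exact Equiv.Perm.zpow_apply_eq_self_of_apply_eq_self hp s

/-- The skew product `(p, t) ↦ (σ p, t + f p)` of the permutation `σ` with the cocycle `f`. -/
def skewProduct {α A : Type*} [AddGroup A] (σ : Equiv.Perm α) (f : α → A) : Equiv.Perm (α × A) :=
  Equiv.prodShear σ fun p ↦ Equiv.addRight (f p)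

theorem skewProduct_apply {α A : Type*} [AddGroup A] (σ : Equiv.Perm α) (f : α → A) (p : α × A) :
    skewProduct σ f p = (σ p.1, p.2 + f p.1) := rfl

theorem skewProduct_pow_three {α A : Type*} [AddGroup α] [AddGroup A] {σ : Equiv.Perm α}
    {f : α → A} {a : A} (hσ : σ ^ 3 = 1) (hf : ∀ p, f p + f (σ p) + f (σ (σ p)) = a) :
    skewProduct σ f ^ 3 = Equiv.addRight (0, a) := by
  ext1 ⟨p, t⟩
  have hσp : σ (σ (σ p)) = p := DFunLike.congr_fun hσ p
  simp [pow_succ, skewProduct_apply, hσp, ← hf p, add_assoc]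

end PlaneAction

namespace Gam

open Subgroup

variable {e η : ℤ}

theorem xG_pow_three (e η : ℤ) : xG e η ^ 3 = hG e η :=
  PresentedGroup.mk_eq_mk_of_mul_inv_mem (rels := gamRels e η) (by simp [gamRels])

theorem yG_pow_three (e η : ℤ) : yG e η ^ 3 = hG e η :=
  PresentedGroup.mk_eq_mk_of_mul_inv_mem (rels := gamRels e η) (by simp [gamRels])

theorem zG_zpow (e η : ℤ) : zG e η ^ (3 * η) = hG e η :=
  PresentedGroup.mk_eq_mk_of_mul_inv_mem (rels := gamRels e η) (by simp [gamRels])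

theorem xG_mul_yG_mul_zG (e η : ℤ) : xG e η * yG e η * zG e η = hG e η ^ e :=
  PresentedGroup.mk_eq_mk_of_mul_inv_mem (rels := gamRels e η) (by simp [gamRels])

theorem zG_pow_three (e : ℤ) (hη : η = 1 ∨ η = -1) : zG e η ^ 3 = hG e η ^ η := by
  rw [← zG_zpow, ← zpow_mul, ← zpow_natCast]
  rcases hη with rfl | rfl <;> rfl

theorem closure_xG_zG (e η : ℤ) : closure {xG e η, zG e η} = ⊤ := by
  have hx : xG e η ∈ closure {xG e η, zG e η} := subset_closure (Or.inl rfl)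
  have hz : zG e η ∈ closure {xG e η, zG e η} := subset_closure (Or.inr rfl)
  have hh : hG e η ∈ closure {xG e η, zG e η} := xG_pow_three e η ▸ pow_mem hx 3
  have hy : yG e η ∈ closure {xG e η, zG e η} := by
    have hyG : yG e η = (xG e η)⁻¹ * hG e η ^ e * (zG e η)⁻¹ := by
      rw [← xG_mul_yG_mul_zG]; group
    rw [hyG]
    exact mul_mem (mul_mem (inv_mem hx) (zpow_mem hh e)) (inv_mem hz)
  rw [eq_top_iff, ← PresentedGroup.closure_range_of, closure_le]
  rintro _ ⟨i, rfl⟩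
  fin_cases i
  exacts [hh, hx, hy, hz]

theorem hG_mem_center (e η : ℤ) : hG e η ∈ center (Gam e η) := by
  rw [← centralizer_univ, ← coe_top, ← closure_xG_zG, centralizer_closure, mem_centralizer_iff]
  rintro _ (rfl | rfl)
  · rw [← xG_pow_three]; exact Commute.self_pow _ 3
  · rw [← zG_zpow]; exact Commute.self_zpow _ _

/-- The homomorphism out of `Γ(e,η)` determined by a solution of its defining relations. -/
def lift {H : Type*} [Group H] {h x y z : H} (hx : x ^ 3 = h) (hy : y ^ 3 = h)
    (hz : z ^ (3 * η) = h) (hxyz : x * y * z = h ^ e) : Gam e η →* H :=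
  PresentedGroup.toGroup (f := ![h, x, y, z]) (by
    rintro r (rfl | rfl | rfl | rfl) <;> simpa [mul_inv_eq_one])

@[simp]
theorem lift_hG {H : Type*} [Group H] {h x y z : H} (hx : x ^ 3 = h) (hy : y ^ 3 = h)
    (hz : z ^ (3 * η) = h) (hxyz : x * y * z = h ^ e) : lift hx hy hz hxyz (hG e η) = h :=
  PresentedGroup.toGroup.of _

@[simp]
theorem lift_xG {H : Type*} [Group H] {h x y z : H} (hx : x ^ 3 = h) (hy : y ^ 3 = h)
    (hz : z ^ (3 * η) = h) (hxyz : x * y * z = h ^ e) : lift hx hy hz hxyz (xG e η) = x :=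
  PresentedGroup.toGroup.of _

@[simp]
theorem lift_zG {H : Type*} [Group H] {h x y z : H} (hx : x ^ 3 = h) (hy : y ^ 3 = h)
    (hz : z ^ (3 * η) = h) (hxyz : x * y * z = h ^ e) : lift hx hy hz hxyz (zG e η) = z :=
  PresentedGroup.toGroup.of _

/-- The action of `Γ(e,η)` on the Eisenstein integers in which `h` acts trivially and `x`, `y`, `z`
act as the rotations `w ↦ ωw`, `w ↦ ωw - ω`, `w ↦ ωw + 1`. -/
def planeAction (e η : ℤ) : Gam e η →* Equiv.Perm (ℤ × ℤ) :=
  lift (h := 1) (x := eisensteinRotation 0) (y := eisensteinRotation (0, -1))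
    (z := eisensteinRotation (1, 0))
    (eisensteinRotation_pow_three _) (eisensteinRotation_pow_three _)
    (by rw [zpow_mul, zpow_ofNat, eisensteinRotation_pow_three, one_zpow])
    (by
      rw [one_zpow]
      ext p <;>
        simp only [Equiv.Perm.mul_apply, Equiv.Perm.one_apply, eisensteinRotation_apply,
          Prod.fst_zero, Prod.snd_zero] <;>
        ring)

theorem planeAction_hG (e η : ℤ) : planeAction e η (hG e η) = 1 := lift_hG ..

theorem planeAction_xG (e η : ℤ) : planeAction e η (xG e η) = eisensteinRotation 0 := lift_xG ..

theorem planeAction_zG (e η : ℤ) : planeAction e η (zG e η) = eisensteinRotation (1, 0) :=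
  lift_zG ..

theorem planeAction_uG (e η : ℤ) : planeAction e η (uG e η) = Equiv.addRight (1, 1) := by
  rw [uG, map_mul, map_inv, planeAction_xG, planeAction_zG, eisensteinRotation_inv_mul]
  rfl

theorem planeAction_vG (e η : ℤ) : planeAction e η (vG e η) = Equiv.addRight (-1, 0) := by
  rw [vG, map_mul, map_inv, planeAction_xG, planeAction_zG, eisensteinRotation_mul_inv]
  rfl

/-- A lift of the rotation `x` to `ℤ[ω] × ℤ` whose cube is the fibre translation by `6`. -/
def nilX : Equiv.Perm ((ℤ × ℤ) × ℤ) := skewProduct (eisensteinRotation 0) fun _ ↦ 2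

/-- A lift of the rotation `y` to `ℤ[ω] × ℤ` whose cube is the fibre translation by `6`. Its
linear term cancels that of `nilZ` in the product `nilX * nilY q * nilZ q η`, and `q` balances
the contribution of that term to the cube. -/
def nilY (q : ℤ) : Equiv.Perm ((ℤ × ℤ) × ℤ) :=
  skewProduct (eisensteinRotation (0, -1)) fun p ↦ 2 + q + 3 * q * p.2

/-- A lift of the rotation `z` to `ℤ[ω] × ℤ` whose cube is the fibre translation by `6η`; the
product `nilX * nilY q * nilZ q η` is the fibre translation by `6e` when `q = 3e - η - 2`. -/
def nilZ (q η : ℤ) : Equiv.Perm ((ℤ × ℤ) × ℤ) :=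
  skewProduct (eisensteinRotation (1, 0)) fun p ↦ 2 * η + q - 3 * q * (p.1 - p.2)

theorem nilX_pow_three : nilX ^ 3 = Equiv.addRight (0, 6) :=
  skewProduct_pow_three (eisensteinRotation_pow_three _) fun _ ↦ rfl

theorem nilY_pow_three (q : ℤ) : nilY q ^ 3 = Equiv.addRight (0, 6) :=
  skewProduct_pow_three (eisensteinRotation_pow_three _) fun p ↦ by
    simp only [eisensteinRotation_apply]; ring

theorem nilZ_pow_three (q η : ℤ) : nilZ q η ^ 3 = Equiv.addRight (0, 6 * η) :=
  skewProduct_pow_three (eisensteinRotation_pow_three _) fun p ↦ by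
    simp only [eisensteinRotation_apply]; ring

theorem nilX_mul_nilY_mul_nilZ (q η : ℤ) :
    nilX * nilY q * nilZ q η = Equiv.addRight (0, 2 * (q + η + 2)) := by
  ext p <;>
    simp only [nilX, nilY, nilZ, skewProduct_apply, eisensteinRotation_apply, Equiv.Perm.mul_apply,
      Equiv.coe_addRight, Prod.fst_add, Prod.snd_add, Prod.fst_zero, Prod.snd_zero] <;>
    ring

/-- The action of `Γ(e,η)` through `nilX`, `nilY` and `nilZ`, in which `h` acts as the fibre
translation by `6`: it lifts `planeAction` to a central extension of Heisenberg type. -/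
def nilAction (e : ℤ) (hη : η = 1 ∨ η = -1) : Gam e η →* Equiv.Perm ((ℤ × ℤ) × ℤ) :=
  lift nilX_pow_three (nilY_pow_three (3 * e - η - 2)) (z := nilZ (3 * e - η - 2) η)
    (by
      have hsq : η * (6 * η) = 6 := by rcases hη with rfl | rfl <;> rfl
      rw [zpow_mul, zpow_ofNat, nilZ_pow_three, Equiv.zsmul_addRight, Prod.smul_mk, smul_zero,
        smul_eq_mul, hsq])
    (by
      rw [nilX_mul_nilY_mul_nilZ, Equiv.zsmul_addRight, Prod.smul_mk, smul_zero, smul_eq_mul]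
      ring_nf)

theorem not_isOfFinOrder_hG (e : ℤ) (hη : η = 1 ∨ η = -1) : ¬IsOfFinOrder (hG e η) := by
  rw [isOfFinOrder_iff_zpow_eq_one]
  rintro ⟨n, hn, hpow⟩
  have hact : (Equiv.addRight (0, 6) : Equiv.Perm ((ℤ × ℤ) × ℤ)) ^ n = 1 := by
    simpa [nilAction] using congrArg (nilAction e hη) hpow
  rw [Equiv.zsmul_addRight] at hact
  have hfibre := congrArg Prod.snd (DFunLike.congr_fun hact 0)
  simp [hn] at hfibre

theorem exists_eq_zpow_mul_zpow_mul_zpow_mul_zpow (e : ℤ) (hη : η = 1 ∨ η = -1) (g : Gam e η) :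
    ∃ b c d m : ℤ, g = uG e η ^ b * vG e η ^ c * xG e η ^ d * hG e η ^ m := by
  have := normal_zpowers_of_mem_center (hG_mem_center e η)
  let π := QuotientGroup.mk' (zpowers (hG e η))
  have hπh : π (hG e η) = 1 := (QuotientGroup.eq_one_iff _).mpr (mem_zpowers _)
  have hx : π (xG e η) ^ 3 = 1 := by rw [← map_pow, xG_pow_three, hπh]
  have hz : π (zG e η) ^ 3 = 1 := by rw [← map_pow, zG_pow_three e hη, map_zpow, hπh, one_zpow]
  have hzx : (π (zG e η) * π (xG e η)) ^ 3 = 1 := by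
    have hxyz : π (xG e η) * π (yG e η) * π (zG e η) = 1 := by
      rw [← map_mul, ← map_mul, xG_mul_yG_mul_zG, map_zpow, hπh, one_zpow]
    have hy : π (zG e η) * π (xG e η) = (π (yG e η))⁻¹ := by
      rw [eq_inv_iff_mul_eq_one, mul_assoc]
      exact mul_eq_one_comm.mp hxyz
    rw [hy, inv_pow, ← map_pow, yG_pow_three, hπh, inv_one]
  have hgen : π g ∈ closure {π (xG e η), π (zG e η)} := by
    rw [← Set.image_pair, ← MonoidHom.map_closure, closure_xG_zG]
    exact mem_map_of_mem π (mem_top g)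
  obtain ⟨b, c, d, hπg⟩ := exists_eq_zpow_mul_zpow_mul_zpow hx hz hzx hgen
  have hker : (uG e η ^ b * vG e η ^ c * xG e η ^ d)⁻¹ * g ∈ zpowers (hG e η) := by
    rw [← QuotientGroup.eq]
    simpa [uG, vG, π] using hπg.symm
  obtain ⟨m, hm⟩ := hker
  exact ⟨b, c, d, m, eq_mul_of_inv_mul_eq hm.symm⟩

theorem planeAction_zpow_mul_zpow_mul_zpow_mul_zpow_apply (e η b c d m : ℤ) (p : ℤ × ℤ) :
    planeAction e η (uG e η ^ b * vG e η ^ c * xG e η ^ d * hG e η ^ m) p =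
      (eisensteinRotation 0 ^ d) p + (b - c, b) := by
  simp only [map_mul, map_zpow, planeAction_uG, planeAction_vG, planeAction_xG, planeAction_hG,
    Equiv.zsmul_addRight, one_zpow, mul_one, Equiv.Perm.mul_apply, Equiv.coe_addRight, add_assoc]
  congr 1
  ext <;> simp only [Prod.smul_mk, Prod.mk_add_mk, smul_eq_mul] <;> ring

theorem center_eq_zpowers_hG (e : ℤ) (hη : η = 1 ∨ η = -1) :
    center (Gam e η) = zpowers (hG e η) := by
  refine le_antisymm (fun g hg ↦ ?_) (zpowers_le.mpr (hG_mem_center e η))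
  obtain ⟨b, c, d, m, hform⟩ := exists_eq_zpow_mul_zpow_mul_zpow_mul_zpow e hη g
  have hact (p) : planeAction e η g p = (eisensteinRotation 0 ^ d) p + (b - c, b) := by
    rw [hform, planeAction_zpow_mul_zpow_mul_zpow_mul_zpow_apply]
  have hcomm (k : Gam e η) (p) :
      planeAction e η k (planeAction e η g p) = planeAction e η g (planeAction e η k p) := by
    simp only [← Equiv.Perm.mul_apply, ← map_mul, mem_center_iff.mp hg k]
  have horigin : planeAction e η g 0 = 0 := by
    have hfixed := hcomm (xG e η) 0
    rw [planeAction_xG] at hfixed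
    exact eq_zero_of_eisensteinRotation_zero_apply_eq_self hfixed
  obtain ⟨rfl, rfl⟩ : b = 0 ∧ c = 0 := by
    simp only [hact, eisensteinRotation_zero_zpow_apply_zero, zero_add, Prod.mk_eq_zero] at horigin
    omega
  obtain ⟨k, rfl⟩ : 3 ∣ d := by
    have htranslate := hcomm (uG e η) 0
    rw [horigin, planeAction_uG, hact] at htranslate
    refine three_dvd_of_eisensteinRotation_zero_zpow_apply_eq_self (p := (1, 1)) (by simp) ?_
    simpa [Prod.mk_zero_zero] using htranslate.symm
  refine ⟨k + m, ?_⟩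
  simp only [hform, pow_zero, one_mul, zpow_mul, zpow_ofNat, xG_pow_three, zpow_add]

theorem isOfFinOrder_abelianization_hG (hq : 3 * e - η - 2 ≠ 0) (hη : η = 1 ∨ η = -1) :
    IsOfFinOrder (Abelianization.of (hG e η)) := by
  refine isOfFinOrder_iff_zpow_eq_one.mpr ⟨_, hq, ?_⟩
  let a := Abelianization.of (G := Gam e η)
  have hxyz : a (xG e η) ^ 3 * a (yG e η) ^ 3 * a (zG e η) ^ 3 = (a (hG e η) ^ e) ^ 3 := by
    simp only [← map_zpow, ← xG_mul_yG_mul_zG, map_mul, mul_pow]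
  simp only [← map_pow, xG_pow_three, yG_pow_three, zG_pow_three e hη] at hxyz
  have hz : a (hG e η) * a (hG e η) * a (hG e η) ^ η = a (hG e η) ^ (2 + η) := by
    rw [zpow_add, zpow_two]
  rw [map_zpow, hz] at hxyz
  rw [show 3 * e - η - 2 = e * 3 - (2 + η) by ring, zpow_sub, zpow_mul, zpow_ofNat, ← hxyz,
    mul_inv_cancel]

theorem finite_abelianization (hq : 3 * e - η - 2 ≠ 0) (hη : η = 1 ∨ η = -1) :
    Finite (Abelianization (Gam e η)) := by
  have hh := isOfFinOrder_abelianization_hG hq hη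
  refine finite_abelianization_of_closure_eq_top (Set.toFinite _) (closure_xG_zG e η) ?_
  rintro _ (rfl | rfl)
  · refine IsOfFinOrder.of_pow (n := 3) ?_ three_ne_zero
    rwa [← map_pow, xG_pow_three]
  · refine IsOfFinOrder.of_pow (n := 3) ?_ three_ne_zero
    rw [← map_pow, zG_pow_three e hη, map_zpow]
    exact hh.zpow

theorem monoidHom_center_eq_one (hq : 3 * e - η - 2 ≠ 0) (hη : η = 1 ∨ η = -1)
    (ψ : Gam e η →* center (Gam e η)) : ψ = 1 := by
  have := finite_abelianization hq hη
  have : IsMulTorsionFree (center (Gam e η)) := by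
    rw [center_eq_zpowers_hG e hη]
    exact isMulTorsionFree_zpowers (not_isOfFinOrder_hG e hη)
  exact monoidHom_eq_one_of_finite_abelianization ψ

end Gam

theorem statement17_general {e η : ℤ} (hq : 3 * e - η - 2 ≠ 0) (hη : η = 1 ∨ η = -1) :
    Subgroup.center (Gam e η) = Subgroup.zpowers (zG e η ^ (3 * η)) ∧
      zG e η ^ (3 * η) = hG e η ∧
      ¬IsOfFinOrder (zG e η ^ (3 * η)) ∧
      Finite (Abelianization (Gam e η)) ∧
      (∀ ψ : Gam e η →* Subgroup.center (Gam e η), ψ = 1) ∧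
      (∀ α β : MulAut (Gam e η),
        (∀ g : Gam e η,
          (QuotientGroup.mk (α g) : Gam e η ⧸ Subgroup.center (Gam e η)) = QuotientGroup.mk (β g)) →
          α = β) := by
  rw [Gam.zG_zpow]
  have htriv := Gam.monoidHom_center_eq_one hq hη
  refine ⟨Gam.center_eq_zpowers_hG e hη, rfl, Gam.not_isOfFinOrder_hG e hη,
    Gam.finite_abelianization hq hη, htriv, fun α β hαβ ↦ ?_⟩
  have hhom : α.toMonoidHom = β.toMonoidHom :=
    monoidHom_eq_of_inv_mul_mem_center htriv fun g ↦ QuotientGroup.eq.mp (hαβ g)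
  exact MulEquiv.toMonoidHom_injective hhom

/-- For every even integer `e` and `η = ±1`: the centre of `Γ(e,η)` is
infinite cyclic, generated by the image of `z^{3η}` (equivalently, by the image of
`h`, since `z^{3η} = h`); moreover `Γ(e,η)` has finite abelianization, every
homomorphism from `Γ(e,η)` to its centre is trivial, and the natural homomorphism
`Aut(Γ(e,η)) → Aut(Γ(e,η)/ζΓ(e,η))` is injective. -/
theorem statement17 :
    ∀ e η : ℤ, Even e → (η = 1 ∨ η = -1) →
      Subgroup.center (Gam e η) = Subgroup.zpowers ((zG e η) ^ (3 * η)) ∧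
      (zG e η) ^ (3 * η) = hG e η ∧
      ¬ IsOfFinOrder ((zG e η) ^ (3 * η)) ∧
      Finite (Abelianization (Gam e η)) ∧
      (∀ ψ : Gam e η →* Subgroup.center (Gam e η), ψ = 1) ∧
      (∀ α β : MulAut (Gam e η),
        (∀ g : Gam e η,
          (QuotientGroup.mk (α g) : Gam e η ⧸ Subgroup.center (Gam e η)) =
            QuotientGroup.mk (β g)) → α = β) := by
  rintro e η ⟨r, rfl⟩ hη
  exact statement17_general (by omega) hη
end
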